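/- Let d ≥ 2 and let r₁,…,r_d be positive integers with ∑_{i=1}^d 1/r_i = 1. Then there exists a constant C < ∞ (depending only on d and r₁,…,r_d) such that for every function f : ℝ^d → ℂ which is max_j r_j times continuously differentiable, with f ∈ L¹(ℝ^d) and with the pure partial derivatives ∂^{r_j} f/∂x_j^{r_j} ∈ L¹(ℝ^d) for each j = 1,…,d, the Fourier transform f̂ of f satisfies ‖f̂‖_{L¹(ℝ^d)} ≤ C ∑_{j=1}^d ‖∂^{r_j} f/∂x_j^{r_j}‖_{L¹(ℝ^d)}. -/

import Mathlib

open MeasureTheory Metric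
open scoped RealInnerProductSpace ENNReal

namespace Kol

/-- the oscillating kernel -/
noncomputable def ek (t : ℝ) : ℂ := Complex.exp (-(Complex.I * (t : ℝ)))

lemma ek_add (a b : ℝ) : ek (a + b) = ek a * ek b := by
  unfold ek
  rw [← Complex.exp_add]
  congr 1
  push_cast
  ring

lemma norm_ek (a : ℝ) : ‖ek a‖ = 1 := by
  unfold ek
  have : -(Complex.I * (a : ℂ)) = ((-a : ℝ) : ℂ) * Complex.I := by push_cast; ring
  rw [this, Complex.norm_exp_ofReal_mul_I]

lemma enorm_ek (a : ℝ) : ‖ek a‖ₑ = 1 := by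
  rw [← ofReal_norm, norm_ek]; simp

lemma continuous_ek : Continuous ek := by
  unfold ek; fun_prop

lemma conj_ek (a : ℝ) : (starRingEnd ℂ) (ek a) = ek (-a) := by
  unfold ek
  rw [← Complex.exp_conj]
  congr 1
  simp

/-- one dimensional Fourier transform -/
noncomputable def FT (v : ℝ → ℂ) (ξ : ℝ) : ℂ := ∫ x, ek (x * ξ) * v x

lemma integrable_ek_mul {v : ℝ → ℂ} (hv : Integrable v) (ξ : ℝ) :
    Integrable (fun x => ek (x * ξ) * v x) := by
  refine hv.bdd_mul (c := 1) ?_ ?_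
  · exact (continuous_ek.comp (by fun_prop)).aestronglyMeasurable
  · exact Filter.Eventually.of_forall fun x => (norm_ek _).le

lemma gauss_ek (b : ℝ) (hb : 0 < b) (t : ℝ) :
    ∫ ξ : ℝ, ek (t * ξ) * (Real.exp (-b * ξ ^ 2) : ℂ)
      = ((Real.sqrt (Real.pi / b) * Real.exp (-(1 / (4 * b)) * t ^ 2) : ℝ) : ℂ) := by
  have h := fourierIntegral_gaussian (b := (b : ℂ)) (by simpa using hb) (-(t : ℂ))
  have e1 : (∫ ξ : ℝ, ek (t * ξ) * (Real.exp (-b * ξ ^ 2) : ℂ))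
      = ∫ x : ℝ, Complex.exp (Complex.I * (-(t : ℂ)) * x) * Complex.exp (-(b : ℂ) * x ^ 2) := by
    congr 1; ext x
    unfold ek
    push_cast
    congr 2
    ring
  rw [e1, h, Real.sqrt_eq_rpow]
  push_cast
  rw [Complex.ofReal_cpow (by positivity)]
  push_cast
  congr 2
  field_simp

lemma lint_gauss (b : ℝ) (hb : 0 < b) :
    ∫⁻ t : ℝ, ENNReal.ofReal (Real.sqrt (Real.pi / b) * Real.exp (-(1 / (4 * b)) * t ^ 2))
      = ENNReal.ofReal (2 * Real.pi) := by
  rw [← ofReal_integral_eq_lintegral_ofReal]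
  · rw [integral_const_mul, integral_gaussian, ← Real.sqrt_mul (by positivity)]
    congr 1
    rw [show Real.pi / b * (Real.pi / (1 / (4 * b))) = (2 * Real.pi) ^ 2 by field_simp; ring]
    exact Real.sqrt_sq (by positivity)
  · exact (integrable_exp_neg_mul_sq (by positivity)).const_mul _
  · exact Filter.Eventually.of_forall fun x => by positivity

lemma bessel_aux {v : ℝ → ℂ} (hm : Measurable v) (hv : Integrable v) (b : ℝ) (hb : 0 < b) :
    ∫⁻ ξ : ℝ, ‖FT v ξ‖ₑ ^ 2 * ENNReal.ofReal (Real.exp (-b * ξ ^ 2))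
      ≤ ENNReal.ofReal (2 * Real.pi) * ∫⁻ x, ‖v x‖ₑ ^ 2 := by
  set K : ℝ → ℝ := fun t => Real.sqrt (Real.pi / b) * Real.exp (-(1 / (4 * b)) * t ^ 2) with hK
  have hKn : ∀ t, 0 ≤ K t := fun t => by simp only [hK]; positivity
  have hKc : Continuous K := by simp only [hK]; fun_prop
  set F : ℝ × ℝ → ℂ := fun z => v z.1 * (starRingEnd ℂ) (v z.2) with hF
  have hcv : Integrable (fun y => (starRingEnd ℂ) (v y)) := by
    have := (Complex.conjCLE : ℂ →L[ℝ] ℂ).integrable_comp hv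
    simpa using this
  have hFi : Integrable F (volume.prod volume) := hv.mul_prod hcv
  have hg : Integrable (fun ξ : ℝ => (Real.exp (-b * ξ ^ 2) : ℂ)) :=
    (integrable_exp_neg_mul_sq hb).ofReal
  -- pointwise formula
  have h1 : ∀ ξ, ((‖FT v ξ‖ ^ 2 * Real.exp (-b * ξ ^ 2) : ℝ) : ℂ)
      = ∫ z : ℝ × ℝ, (F z * ek ((z.1 - z.2) * ξ)) * (Real.exp (-b * ξ ^ 2) : ℂ)
          ∂(volume.prod volume) := by
    intro ξ
    have e2 : (starRingEnd ℂ) (FT v ξ) = ∫ y, ek (-(y * ξ)) * (starRingEnd ℂ) (v y) := by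
      unfold FT
      rw [← integral_conj]
      congr 1; ext y
      rw [map_mul, conj_ek]
    rw [integral_mul_const]
    push_cast
    congr 1
    rw [← Complex.mul_conj', e2]
    unfold FT
    rw [← integral_prod_mul]
    congr 1; ext z
    simp only [hF]
    rw [show (z.1 - z.2) * ξ = z.1 * ξ + -(z.2 * ξ) by ring, ek_add]
    ring
  have hInt2 : Integrable (Function.uncurry fun (ξ : ℝ) (z : ℝ × ℝ) =>
      (F z * ek ((z.1 - z.2) * ξ)) * (Real.exp (-b * ξ ^ 2) : ℂ))
      (volume.prod (volume.prod volume)) := by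
    have h0 : Integrable (fun w : ℝ × (ℝ × ℝ) => (Real.exp (-b * w.1 ^ 2) : ℂ) * F w.2)
      (volume.prod (volume.prod volume)) := hg.mul_prod hFi
    have := h0.bdd_mul (c := 1) (f := fun w : ℝ × (ℝ × ℝ) => ek ((w.2.1 - w.2.2) * w.1))
      ((continuous_ek.comp (by fun_prop)).aestronglyMeasurable)
      (Filter.Eventually.of_forall fun x => (norm_ek _).le)
    refine this.congr (Filter.Eventually.of_forall fun w => ?_)
    simp only [Function.uncurry]
    ring
  have h2 : ((∫ ξ : ℝ, ‖FT v ξ‖ ^ 2 * Real.exp (-b * ξ ^ 2) : ℝ) : ℂ)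
      = ∫ z : ℝ × ℝ, F z * (K (z.1 - z.2) : ℂ) ∂(volume.prod volume) := by
    rw [← integral_complex_ofReal]
    simp_rw [h1]
    rw [integral_integral_swap hInt2]
    congr 1; ext z
    rw [← gauss_ek b hb, ← integral_const_mul]
    congr 1; ext ξ; ring
  have hreal : Integrable (fun ξ : ℝ => ‖FT v ξ‖ ^ 2 * Real.exp (-b * ξ ^ 2)) := by
    have h3 := hInt2.integral_prod_left
    have h4 : Integrable (fun ξ : ℝ => ((‖FT v ξ‖ ^ 2 * Real.exp (-b * ξ ^ 2) : ℝ) : ℂ)) := by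
      refine h3.congr (Filter.Eventually.of_forall fun ξ => ?_)
      simp only [h1 ξ, Function.uncurry]
    exact h4.re
  have h5 : ∫⁻ ξ : ℝ, ‖FT v ξ‖ₑ ^ 2 * ENNReal.ofReal (Real.exp (-b * ξ ^ 2))
      = ‖∫ z : ℝ × ℝ, F z * (K (z.1 - z.2) : ℂ) ∂(volume.prod volume)‖ₑ := by
    rw [← h2, ← ofReal_norm, Complex.norm_real, Real.norm_of_nonneg
      (integral_nonneg fun ξ => by positivity), ofReal_integral_eq_lintegral_ofReal hreal
      (Filter.Eventually.of_forall fun ξ => by positivity)]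
    congr 1; ext ξ
    rw [ENNReal.ofReal_mul (by positivity), ENNReal.ofReal_pow (by positivity), ofReal_norm]
  rw [h5]
  refine (enorm_integral_le_lintegral_enorm _).trans ?_
  set k : ℝ → ℝ≥0∞ := fun t => ENNReal.ofReal (K t) with hk
  have hkm : Measurable k := hKc.measurable.ennreal_ofReal
  have hvm : Measurable fun x => ‖v x‖ₑ ^ 2 := (hm.enorm).pow_const 2
  have hkint : ∫⁻ t, k t = ENNReal.ofReal (2 * Real.pi) := lint_gauss b hb
  have hksymm : ∀ t, k (-t) = k t := by intro t; simp [hk, hK]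
  have h6 : ∀ z : ℝ × ℝ, ‖F z * (K (z.1 - z.2) : ℂ)‖ₑ
      ≤ 2⁻¹ * (‖v z.1‖ₑ ^ 2 * k (z.1 - z.2)) + 2⁻¹ * (‖v z.2‖ₑ ^ 2 * k (z.1 - z.2)) := by
    intro z
    have : ‖F z * (K (z.1 - z.2) : ℂ)‖ ≤ 2⁻¹ * (‖v z.1‖ ^ 2 * K (z.1 - z.2))
        + 2⁻¹ * (‖v z.2‖ ^ 2 * K (z.1 - z.2)) := by
      simp only [hF, norm_mul, RCLike.norm_conj, Complex.norm_real, Real.norm_of_nonneg (hKn _)]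
      nlinarith [mul_nonneg (sq_nonneg (‖v z.1‖ - ‖v z.2‖)) (hKn (z.1 - z.2))]
    have h7 := ENNReal.ofReal_le_ofReal this
    rw [ofReal_norm, ENNReal.ofReal_add (by have := hKn (z.1 - z.2); positivity)
      (by have := hKn (z.1 - z.2); positivity), ENNReal.ofReal_mul (by positivity),
      ENNReal.ofReal_mul (p := ‖v z.1‖ ^ 2) (by positivity),
      ENNReal.ofReal_mul (p := 2⁻¹) (by positivity),
      ENNReal.ofReal_mul (p := ‖v z.2‖ ^ 2) (by positivity), ENNReal.ofReal_pow (by positivity),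
      ENNReal.ofReal_pow (by positivity), ofReal_norm, ofReal_norm,
      ENNReal.ofReal_inv_of_pos (by norm_num)] at h7
    simpa using h7
  refine (lintegral_mono h6).trans ?_
  have m1 : Measurable fun z : ℝ × ℝ => ‖v z.1‖ₑ ^ 2 * k (z.1 - z.2) :=
    (hvm.comp measurable_fst).mul (hkm.comp (measurable_fst.sub measurable_snd))
  have m2 : Measurable fun z : ℝ × ℝ => ‖v z.2‖ₑ ^ 2 * k (z.1 - z.2) :=
    (hvm.comp measurable_snd).mul (hkm.comp (measurable_fst.sub measurable_snd))
  rw [lintegral_add_left (m1.const_mul _), lintegral_const_mul _ m1, lintegral_const_mul _ m2]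
  have e1 : ∫⁻ z : ℝ × ℝ, ‖v z.1‖ₑ ^ 2 * k (z.1 - z.2) ∂(volume.prod volume)
      = ENNReal.ofReal (2 * Real.pi) * ∫⁻ x, ‖v x‖ₑ ^ 2 := by
    rw [lintegral_prod _ m1.aemeasurable, ← hkint, mul_comm, ← lintegral_mul_const _ hvm]
    congr 1; ext x
    dsimp only
    rw [lintegral_const_mul _ (show Measurable fun y => k (x - y) from
      hkm.comp (measurable_const.sub measurable_id))]
    congr 1
    exact lintegral_sub_left_eq_self k x
  have e2 : ∫⁻ z : ℝ × ℝ, ‖v z.2‖ₑ ^ 2 * k (z.1 - z.2) ∂(volume.prod volume)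
      = ENNReal.ofReal (2 * Real.pi) * ∫⁻ x, ‖v x‖ₑ ^ 2 := by
    rw [lintegral_prod_symm _ m2.aemeasurable, ← hkint, mul_comm, ← lintegral_mul_const _ hvm]
    congr 1; ext x
    dsimp only
    rw [lintegral_const_mul _ (show Measurable fun y => k (y - x) from
      hkm.comp (measurable_id.sub measurable_const))]
    congr 1
    exact lintegral_sub_right_eq_self k x
  rw [e1, e2, ← add_mul, ENNReal.inv_two_add_inv_two, one_mul]

/-- Cauchy-Schwarz on a set -/
lemma cs_set {α : Type*} [MeasurableSpace α] {μ : Measure α} {f : α → ℝ≥0∞} (hf : Measurable f)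
    (S : Set α) :
    ∫⁻ x in S, f x ∂μ ≤ (μ S) ^ (1 / 2 : ℝ) * (∫⁻ x in S, f x ^ 2 ∂μ) ^ (1 / 2 : ℝ) := by
  have := ENNReal.lintegral_mul_le_Lp_mul_Lq (μ.restrict S) Real.HolderConjugate.two_two
    (f := fun _ => 1) (g := f) aemeasurable_const hf.aemeasurable
  simpa using this

lemma measurable_FT {v : ℝ → ℂ} (hm : Measurable v) : Measurable (FT v) := by
  unfold FT
  have : StronglyMeasurable (fun w : ℝ × ℝ => ek (w.2 * w.1) * v w.2) := by
    apply Measurable.stronglyMeasurable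
    exact ((continuous_ek.comp (by fun_prop)).measurable).mul (hm.comp measurable_snd)
  exact (this.integral_prod_right (ν := volume)).measurable

lemma bessel {v : ℝ → ℂ} (hm : Measurable v) (hv : Integrable v) (R : ℝ) (hR : 0 < R) :
    ∫⁻ ξ in Set.Icc (-R) R, ‖FT v ξ‖ₑ
      ≤ ENNReal.ofReal (8 * Real.sqrt R) * (∫⁻ x, ‖v x‖ₑ ^ 2) ^ (1 / 2 : ℝ) := by
  refine (cs_set (measurable_FT hm).enorm _).trans ?_
  have hb := bessel_aux hm hv (1 / R ^ 2) (by positivity)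
  have h1 : ∫⁻ ξ in Set.Icc (-R) R, ‖FT v ξ‖ₑ ^ 2
      ≤ ENNReal.ofReal (3 * (2 * Real.pi)) * ∫⁻ x, ‖v x‖ₑ ^ 2 := by
    have : ∫⁻ ξ in Set.Icc (-R) R, ‖FT v ξ‖ₑ ^ 2 ≤ ENNReal.ofReal 3 *
        ∫⁻ ξ : ℝ, ‖FT v ξ‖ₑ ^ 2 * ENNReal.ofReal (Real.exp (-(1 / R ^ 2) * ξ ^ 2)) := by
      rw [← lintegral_const_mul']
      swap
      · exact ENNReal.ofReal_ne_top
      refine le_trans ?_ (setLIntegral_le_lintegral (Set.Icc (-R) R) _)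
      refine setLIntegral_mono' measurableSet_Icc fun ξ hξ => ?_
      have : 1 ≤ 3 * Real.exp (-(1 / R ^ 2) * ξ ^ 2) := by
        have h2 : ξ ^ 2 ≤ R ^ 2 := sq_le_sq' hξ.1 hξ.2
        have h3 : -1 ≤ -(1 / R ^ 2) * ξ ^ 2 := by
          rw [neg_mul, neg_le_neg_iff, one_div, inv_mul_le_iff₀ (by positivity)]
          linarith
        have h4 := Real.exp_le_exp.mpr h3
        have h5 : Real.exp (-1) * Real.exp 1 = 1 := by rw [← Real.exp_add]; simp
        have h6 := Real.exp_one_lt_d9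
        nlinarith [Real.exp_pos (-1)]
      calc ‖FT v ξ‖ₑ ^ 2 = ‖FT v ξ‖ₑ ^ 2 * 1 := by rw [mul_one]
        _ ≤ ‖FT v ξ‖ₑ ^ 2 * ENNReal.ofReal (3 * Real.exp (-(1 / R ^ 2) * ξ ^ 2)) := by
            gcongr; simpa using ENNReal.ofReal_le_ofReal this
        _ = _ := by rw [ENNReal.ofReal_mul (by norm_num)]; ring
    refine this.trans ?_
    rw [ENNReal.ofReal_mul (by norm_num), mul_assoc]
    gcongr
  calc _ ≤ (ENNReal.ofReal (2 * R)) ^ (1 / 2 : ℝ) *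
        (ENNReal.ofReal (3 * (2 * Real.pi)) * ∫⁻ x, ‖v x‖ₑ ^ 2) ^ (1 / 2 : ℝ) := by
        gcongr
        rw [Real.volume_Icc]; apply le_of_eq; congr 1; ring
    _ = ENNReal.ofReal (Real.sqrt (2 * R * (3 * (2 * Real.pi)))) * (∫⁻ x, ‖v x‖ₑ ^ 2) ^ (1 / 2 : ℝ) := by
        rw [ENNReal.mul_rpow_of_nonneg _ _ (by norm_num), ← mul_assoc,
          ENNReal.ofReal_rpow_of_nonneg (by positivity) (by norm_num),
          ENNReal.ofReal_rpow_of_nonneg (by positivity) (by norm_num),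
          ← ENNReal.ofReal_mul (by positivity), ← Real.sqrt_eq_rpow, ← Real.sqrt_eq_rpow,
          ← Real.sqrt_mul (by positivity)]
    _ ≤ _ := by
        gcongr
        rw [Real.sqrt_le_iff]
        refine ⟨by positivity, ?_⟩
        rw [mul_pow, Real.sq_sqrt hR.le]
        nlinarith [Real.pi_lt_four]

end Kol

open MeasureTheory Metric
open scoped RealInnerProductSpace ENNReal

namespace Kol

lemma diff_L1 {v : ℝ → ℂ} (hv : ContDiff ℝ 1 v) (t : ℝ) :
    ∫⁻ x, ‖fwdDiff t v x‖ₑ ≤ ENNReal.ofReal |t| * ∫⁻ x, ‖deriv v x‖ₑ := by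
  have hd : Differentiable ℝ v := hv.differentiable (by norm_num)
  have hc : Continuous (deriv v) := hv.continuous_deriv (by norm_num)
  have h1 : ∀ x, ‖fwdDiff t v x‖ₑ
      ≤ ∫⁻ τ in Set.Ioc (0:ℝ) 1, ENNReal.ofReal |t| * ‖deriv v (x + τ * t)‖ₑ := by
    intro x
    have h2 : ∫ τ in (0:ℝ)..1, (t : ℂ) * deriv v (x + τ * t) = v (x + 1 * t) - v (x + 0 * t) := by
      apply intervalIntegral.integral_eq_sub_of_hasDerivAt (f := fun τ => v (x + τ * t))
      · intro τ _
        have h3 := (hd (x + τ * t)).hasDerivAt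
        have h4 : HasDerivAt (fun τ : ℝ => x + τ * t) t τ := by
          simpa using ((hasDerivAt_id τ).mul_const t).const_add x
        have h5 := HasDerivAt.scomp τ h3 h4
        simpa [Function.comp_def] using h5
      · apply Continuous.intervalIntegrable
        fun_prop
    have h6 : fwdDiff t v x = ∫ τ in Set.Ioc (0:ℝ) 1, (t : ℂ) * deriv v (x + τ * t) := by
      rw [← intervalIntegral.integral_of_le (by norm_num), h2]
      simp [fwdDiff]
    rw [h6]
    refine (enorm_integral_le_lintegral_enorm _).trans (le_of_eq ?_)
    congr 1; ext τ
    rw [enorm_mul, ← ofReal_norm (t : ℂ), Complex.norm_real, Real.norm_eq_abs]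
  refine (lintegral_mono h1).trans ?_
  rw [lintegral_lintegral_swap]
  · have : ∀ τ : ℝ, ∫⁻ x, ENNReal.ofReal |t| * ‖deriv v (x + τ * t)‖ₑ
        = ENNReal.ofReal |t| * ∫⁻ x, ‖deriv v x‖ₑ := by
      intro τ
      rw [lintegral_const_mul' _ _ ENNReal.ofReal_ne_top]
      congr 1
      exact lintegral_add_right_eq_self (fun x => ‖deriv v x‖ₑ) (τ * t)
    simp [this]
  · apply Measurable.aemeasurable
    apply Continuous.measurable
    simp only [Function.uncurry_def]
    refine ENNReal.continuous_const_mul ENNReal.ofReal_ne_top |>.comp ?_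
    exact (hc.comp (by fun_prop)).enorm

lemma iteratedDeriv_fwdDiff {v : ℝ → ℂ} (n : ℕ) (hv : ContDiff ℝ n v) (t : ℝ) :
    iteratedDeriv n (fwdDiff t v) = fwdDiff t (iteratedDeriv n v) := by
  ext x
  have h1 : ContDiff ℝ n (fun x => v (x + t)) := hv.comp (by fun_prop)
  have e : fwdDiff t v = fun x => v (x + t) - v x := rfl
  rw [e, iteratedDeriv_fun_sub h1.contDiffAt hv.contDiffAt, iteratedDeriv_comp_add_const]
  rfl

lemma contDiff_fwdDiff {v : ℝ → ℂ} {n : ℕ} (hv : ContDiff ℝ n v) (t : ℝ) :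
    ContDiff ℝ n (fwdDiff t v) :=
  ContDiff.sub (hv.comp (by fun_prop)) hv

lemma contDiff_fwdDiff_iter {v : ℝ → ℂ} {n : ℕ} (hv : ContDiff ℝ n v) (t : ℝ) (k : ℕ) :
    ContDiff ℝ n ((fwdDiff t)^[k] v) := by
  induction k with
  | zero => exact hv
  | succ k ih => rw [Function.iterate_succ_apply']; exact contDiff_fwdDiff ih t

lemma diff_iter_L1 (p : ℕ) (t : ℝ) : ∀ {v : ℝ → ℂ}, ContDiff ℝ p v →
    ∫⁻ x, ‖(fwdDiff t)^[p] v x‖ₑ ≤ ENNReal.ofReal |t| ^ p * ∫⁻ x, ‖iteratedDeriv p v x‖ₑ := by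
  induction p with
  | zero => intro v _; simp
  | succ p ih =>
    intro v hv
    have hv' : ContDiff ℝ p v := hv.of_le (by norm_cast; omega)
    rw [Function.iterate_succ_apply]
    refine (ih (contDiff_fwdDiff hv' t)).trans ?_
    rw [iteratedDeriv_fwdDiff p hv', pow_succ, mul_assoc]
    gcongr
    have h1 : ContDiff ℝ 1 (iteratedDeriv p v) := by
      have := ContDiff.iterate_deriv' 1 p (f := v) (by rw [add_comm]; exact hv)
      rw [iteratedDeriv_eq_iterate]
      exact_mod_cast this
    have := diff_L1 h1 t
    simpa [iteratedDeriv_succ] using this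

lemma sup_le_L1_deriv {w : ℝ → ℂ} (hw : ContDiff ℝ 1 w) (hi : Integrable w) (x : ℝ) :
    ‖w x‖ₑ ≤ ∫⁻ x, ‖deriv w x‖ₑ := by
  have hd : Differentiable ℝ w := hw.differentiable (by norm_num)
  have hc : Continuous (deriv w) := hw.continuous_deriv (by norm_num)
  by_cases htop : ∫⁻ x, ‖deriv w x‖ₑ = ⊤
  · rw [htop]; exact le_top
  have hi' : Integrable (deriv w) := ⟨hc.aestronglyMeasurable, lt_top_iff_ne_top.mpr htop⟩
  have h0 : Filter.Tendsto w Filter.atBot (nhds 0) :=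
    tendsto_zero_of_hasDerivAt_of_integrableOn_Iic (a := x)
      (fun y _ => (hd y).hasDerivAt) hi'.integrableOn hi.integrableOn
  have h1 := integral_Iic_of_hasDerivAt_of_tendsto' (a := x) (fun y _ => (hd y).hasDerivAt)
    hi'.integrableOn h0
  rw [sub_zero] at h1
  rw [← h1]
  exact (enorm_integral_le_lintegral_enorm _).trans (setLIntegral_le_lintegral _ _)

lemma integrable_fwdDiff {v : ℝ → ℂ} (hv : Integrable v) (t : ℝ) : Integrable (fwdDiff t v) :=
  (hv.comp_add_right t).sub hv

lemma integrable_fwdDiff_iter {v : ℝ → ℂ} (hv : Integrable v) (t : ℝ) (k : ℕ) :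
    Integrable ((fwdDiff t)^[k] v) := by
  induction k with
  | zero => exact hv
  | succ k ih => rw [Function.iterate_succ_apply']; exact integrable_fwdDiff ih t

lemma deriv_fwdDiff_iter {v : ℝ → ℂ} (hv : ContDiff ℝ 1 v) (t : ℝ) (k : ℕ) :
    deriv ((fwdDiff t)^[k] v) = (fwdDiff t)^[k] (deriv v) := by
  induction k with
  | zero => rfl
  | succ k ih =>
    rw [Function.iterate_succ_apply', Function.iterate_succ_apply', ← ih]
    have := iteratedDeriv_fwdDiff 1 (contDiff_fwdDiff_iter (n := 1) (by exact_mod_cast hv) t k) t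
    simpa using this

lemma diff_sup (k : ℕ) (t : ℝ) {v : ℝ → ℂ} (hv : ContDiff ℝ (k + 1 : ℕ) v) (hi : Integrable v)
    (x : ℝ) :
    ‖(fwdDiff t)^[k] v x‖ₑ ≤ ENNReal.ofReal |t| ^ k * ∫⁻ x, ‖iteratedDeriv (k + 1) v x‖ₑ := by
  have hv1 : ContDiff ℝ 1 v := hv.of_le (by norm_cast; omega)
  have h1 : ContDiff ℝ 1 ((fwdDiff t)^[k] v) := by
    exact_mod_cast contDiff_fwdDiff_iter (n := 1) (by exact_mod_cast hv1) t k
  refine (sup_le_L1_deriv h1 (integrable_fwdDiff_iter hi t k) x).trans ?_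
  rw [deriv_fwdDiff_iter hv1, iteratedDeriv_succ']
  apply diff_iter_L1
  have := (contDiff_succ_iff_deriv (n := (k : WithTop ℕ∞)) (f := v)).mp (by exact_mod_cast hv)
  exact this.2.2

lemma FT_fwdDiff {v : ℝ → ℂ} (hv : Integrable v) (t ξ : ℝ) :
    FT (fwdDiff t v) ξ = (ek (-(t * ξ)) - 1) * FT v ξ := by
  unfold FT fwdDiff
  simp_rw [mul_sub]
  rw [integral_sub (integrable_ek_mul (hv.comp_add_right t) ξ) (integrable_ek_mul hv ξ), sub_mul,
    one_mul]
  congr 1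
  rw [← integral_const_mul, ← integral_add_right_eq_self (fun x => ek (-(t * ξ)) * (ek (x * ξ) * v x)) t]
  congr 1; ext x
  rw [← mul_assoc, ← ek_add]
  congr 2; ring

lemma FT_fwdDiff_iter {v : ℝ → ℂ} (hv : Integrable v) (t ξ : ℝ) (k : ℕ) :
    FT ((fwdDiff t)^[k] v) ξ = (ek (-(t * ξ)) - 1) ^ k * FT v ξ := by
  induction k with
  | zero => simp
  | succ k ih =>
    rw [Function.iterate_succ_apply', FT_fwdDiff (integrable_fwdDiff_iter hv t k), ih]; ring

lemma enorm_FT_le (v : ℝ → ℂ) (ξ : ℝ) : ‖FT v ξ‖ₑ ≤ ∫⁻ x, ‖v x‖ₑ := by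
  unfold FT
  refine (enorm_integral_le_lintegral_enorm _).trans (le_of_eq ?_)
  congr 1; ext x
  rw [enorm_mul, enorm_ek, one_mul]

lemma FT_decay (p : ℕ) {v : ℝ → ℂ} (hv : ContDiff ℝ p v) (hi : Integrable v) {ξ : ℝ} (hξ : ξ ≠ 0) :
    ‖FT v ξ‖ₑ ≤ ENNReal.ofReal ((2 / |ξ|) ^ p) * ∫⁻ x, ‖iteratedDeriv p v x‖ₑ := by
  have h1 := (enorm_FT_le ((fwdDiff (Real.pi / ξ))^[p] v) ξ).trans (diff_iter_L1 p (Real.pi / ξ) hv)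
  rw [FT_fwdDiff_iter hi, div_mul_cancel₀ _ hξ] at h1
  have h2 : ek (-Real.pi) = -1 := by
    unfold ek
    rw [← Complex.exp_pi_mul_I]; congr 1; push_cast; ring
  rw [h2, enorm_mul, enorm_pow] at h1
  have h3 : ‖(-1 - 1 : ℂ)‖ₑ = 2 := by
    rw [← ofReal_norm]; norm_num
  rw [h3] at h1
  have h4 : ENNReal.ofReal |Real.pi / ξ| ^ p ≤ 2 ^ p * ENNReal.ofReal ((2 / |ξ|) ^ p) := by
    rw [ENNReal.ofReal_pow (by positivity), ← mul_pow]
    gcongr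
    rw [show (2 : ℝ≥0∞) = ENNReal.ofReal 2 by simp, ← ENNReal.ofReal_mul (by norm_num)]
    apply ENNReal.ofReal_le_ofReal
    rw [abs_div, abs_of_pos Real.pi_pos]
    have : 0 < |ξ| := abs_pos.mpr hξ
    rw [← mul_div_assoc]
    gcongr
    linarith [Real.pi_lt_four]
  have h5 : 2 ^ p * ‖FT v ξ‖ₑ ≤ 2 ^ p * (ENNReal.ofReal ((2 / |ξ|) ^ p) * ∫⁻ x, ‖iteratedDeriv p v x‖ₑ) := by
    refine h1.trans ?_
    rw [← mul_assoc]
    gcongr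
  rwa [ENNReal.mul_le_mul_iff_right (by positivity) (by finiteness)] at h5

end Kol

open MeasureTheory Metric
open scoped RealInnerProductSpace ENNReal

namespace Kol

/-- decreasing rearrangement -/
noncomputable def lam (φ : ℝ → ℝ≥0∞) (t : ℝ≥0∞) : ℝ≥0∞ :=
  sInf {l : ℝ≥0∞ | volume {x | l < φ x} ≤ t}

lemma lam_anti (φ : ℝ → ℝ≥0∞) {t t' : ℝ≥0∞} (h : t ≤ t') : lam φ t' ≤ lam φ t :=
  sInf_le_sInf fun _ hl => le_trans hl h

lemma meas_lam_lt (φ : ℝ → ℝ≥0∞) (t : ℝ≥0∞) : volume {x | lam φ t < φ x} ≤ t := by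
  obtain ⟨u, hu, hut, huS⟩ := exists_seq_tendsto_sInf
    (S := {l : ℝ≥0∞ | volume {x | l < φ x} ≤ t}) ⟨⊤, by simp⟩ (OrderBot.bddBelow _)
  have h1 : {x | lam φ t < φ x} ⊆ ⋃ n, {x | u n < φ x} := by
    intro x hx
    have := (hut.eventually (gt_mem_nhds hx)).exists
    simpa using this
  refine (measure_mono h1).trans ?_
  rw [Monotone.measure_iUnion]
  · exact iSup_le fun n => huS n
  · intro n m hnm x hx
    exact lt_of_le_of_lt (hu hnm) hx

lemma lt_meas_of_lt_lam {φ : ℝ → ℝ≥0∞} {t l : ℝ≥0∞} (h : l < lam φ t) :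
    t < volume {x | l < φ x} := by
  by_contra hc
  have h1 : l ∈ {l : ℝ≥0∞ | volume {x | l < φ x} ≤ t} := not_lt.mp hc
  exact absurd (sInf_le h1) (not_le.mpr h)

lemma lint_indicator (l : ℝ≥0∞) :
    ∫⁻ t in Set.Ioi (0:ℝ), (if ENNReal.ofReal t < l then 1 else 0) = l := by
  have h0 : ∀ t : ℝ, (if ENNReal.ofReal t < l then (1:ℝ≥0∞) else 0)
      = Set.indicator {t : ℝ | ENNReal.ofReal t < l} 1 t := by
    intro t; simp [Set.indicator_apply]
  simp_rw [h0]
  have hm : MeasurableSet {t : ℝ | ENNReal.ofReal t < l} :=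
    measurableSet_lt ENNReal.measurable_ofReal measurable_const
  rw [lintegral_indicator_one hm, Measure.restrict_apply hm]
  by_cases hl : l = ⊤
  · subst hl
    have : {t : ℝ | ENNReal.ofReal t < ⊤} ∩ Set.Ioi 0 = Set.Ioi (0:ℝ) := by
      ext t; simp
    rw [this, Real.volume_Ioi]
  · have : {t : ℝ | ENNReal.ofReal t < l} ∩ Set.Ioi 0 = Set.Ioo (0:ℝ) l.toReal := by
      ext t
      simp only [Set.mem_inter_iff, Set.mem_setOf_eq, Set.mem_Ioi, Set.mem_Ioo]
      constructor
      · rintro ⟨h1, h2⟩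
        exact ⟨h2, (ENNReal.ofReal_lt_iff_lt_toReal h2.le hl).mp h1⟩
      · rintro ⟨h1, h2⟩
        exact ⟨(ENNReal.ofReal_lt_iff_lt_toReal h1.le hl).mpr h2, h1⟩
    rw [this, Real.volume_Ioo, sub_zero, ENNReal.ofReal_toReal hl]

lemma layer {φ : ℝ → ℝ≥0∞} (hφ : Measurable φ) :
    ∫⁻ t in Set.Ioi (0:ℝ), volume {x | ENNReal.ofReal t < φ x} = ∫⁻ x, φ x := by
  calc _ = ∫⁻ t in Set.Ioi (0:ℝ), ∫⁻ x, (if ENNReal.ofReal t < φ x then 1 else 0) := by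
        congr 1; ext t
        have hm : MeasurableSet {x | ENNReal.ofReal t < φ x} :=
          measurableSet_lt measurable_const hφ
        rw [← lintegral_indicator_one hm]
        congr 1; ext x; simp [Set.indicator_apply]
    _ = ∫⁻ x, ∫⁻ t in Set.Ioi (0:ℝ), (if ENNReal.ofReal t < φ x then 1 else 0) := by
        rw [lintegral_lintegral_swap]
        apply Measurable.aemeasurable
        simp only [Function.uncurry_def]
        refine Measurable.ite ?_ measurable_const measurable_const
        exact measurableSet_lt (ENNReal.measurable_ofReal.comp measurable_fst)
          (hφ.comp measurable_snd)
    _ = _ := by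
        congr 1; ext x; exact lint_indicator _

/-- geometric scale -/
noncomputable def sg (b : ℝ) (n : ℤ) : ℝ≥0∞ := ENNReal.ofReal (b ^ n)

lemma sg_succ {b : ℝ} (hb : 2 ≤ b) (n : ℤ) : sg b (n + 1) = ENNReal.ofReal b * sg b n := by
  unfold sg
  rw [zpow_add_one₀ (by positivity), mul_comm, ENNReal.ofReal_mul (by positivity)]

lemma sg_mono {b : ℝ} (hb : 2 ≤ b) {n m : ℤ} (h : n ≤ m) : sg b n ≤ sg b m :=
  ENNReal.ofReal_le_ofReal (zpow_le_zpow_right₀ (by linarith) h)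

lemma sg_ne_top (b : ℝ) (n : ℤ) : sg b n ≠ ⊤ := ENNReal.ofReal_ne_top

lemma sg_pos {b : ℝ} (hb : 2 ≤ b) (n : ℤ) : sg b n ≠ 0 := by
  unfold sg
  have : 0 < b ^ n := by positivity
  simpa using this

lemma sg_sq {b : ℝ} (hb : 2 ≤ b) (n : ℤ) : sg (b ^ 2) n = sg b n ^ 2 := by
  unfold sg
  rw [← ENNReal.ofReal_pow (by positivity)]
  congr 1
  rw [← zpow_natCast, ← zpow_natCast, ← zpow_mul, ← zpow_mul, mul_comm]

lemma geo {b : ℝ} (hb : 2 ≤ b) (k : ℤ) :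
    ∑' n : ℤ, (if n ≤ k then sg b n else 0) ≤ 2 * sg b k := by
  have hinj : Function.Injective (fun j : ℕ => k - (j : ℤ)) := by
    intro i j h; simpa using h
  rw [← hinj.tsum_eq]
  · have h1 : ∀ j : ℕ, (if k - (j:ℤ) ≤ k then sg b (k - j) else 0) ≤ sg b k * (2⁻¹) ^ j := by
      intro j
      rw [if_pos (by omega)]
      unfold sg
      rw [zpow_sub₀ (by positivity), ENNReal.ofReal_div_of_pos (by positivity), div_eq_mul_inv]
      gcongr
      rw [← ENNReal.inv_pow]
      apply ENNReal.inv_le_inv.mpr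
      rw [show (2 : ℝ≥0∞) = ENNReal.ofReal 2 by simp, ← ENNReal.ofReal_pow (by norm_num),
        zpow_natCast]
      gcongr
    refine (ENNReal.tsum_le_tsum h1).trans (le_of_eq ?_)
    rw [ENNReal.tsum_mul_left, ENNReal.tsum_geometric, ENNReal.one_sub_inv_two, inv_inv, mul_comm]
  · intro n hn
    simp only [Function.mem_support, ne_eq, ite_eq_right_iff, not_forall] at hn
    obtain ⟨h, -⟩ := hn
    exact ⟨(k - n).toNat, by simp; omega⟩

lemma geo_lt {b : ℝ} (hb : 2 ≤ b) (M : ℝ≥0∞) :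
    ∑' n : ℤ, (if sg b n < M then sg b n else 0) ≤ 2 * M := by
  by_cases hM : M = ⊤
  · rw [hM]; simp
  by_cases hM0 : M = 0
  · rw [hM0]; simp
  have hpos : 0 < M.toReal := ENNReal.toReal_pos hM0 hM
  obtain ⟨N, hN⟩ := exists_mem_Ioc_zpow hpos (show 1 < b by linarith)
  have hNM : sg b N ≤ M := by
    rw [← ENNReal.ofReal_toReal hM]; exact ENNReal.ofReal_le_ofReal hN.1.le
  refine le_trans ?_ ((geo hb N).trans (by gcongr))
  refine ENNReal.tsum_le_tsum fun n => ?_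
  split_ifs with h1 h2 h2
  · exact le_rfl
  · exfalso
    have : M ≤ sg b n := by
      rw [← ENNReal.ofReal_toReal hM]
      refine ENNReal.ofReal_le_ofReal (hN.2.trans ?_)
      exact zpow_le_zpow_right₀ (by linarith) (by omega)
    exact absurd h1 (not_lt.mpr this)
  · exact zero_le
  · exact le_rfl

lemma sum_lam {b : ℝ} (hb : 2 ≤ b) {φ : ℝ → ℝ≥0∞} (hφ : Measurable φ) :
    ∑' n : ℤ, sg b n * lam φ (sg b n) ≤ 2 * ∫⁻ x, φ x := by
  calc _ = ∑' n : ℤ, ∫⁻ t in Set.Ioi (0:ℝ),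
          sg b n * (if ENNReal.ofReal t < lam φ (sg b n) then 1 else 0) := by
        congr 1; ext n
        rw [lintegral_const_mul' _ _ (sg_ne_top b n), lint_indicator]
    _ = ∫⁻ t in Set.Ioi (0:ℝ), ∑' n : ℤ,
          sg b n * (if ENNReal.ofReal t < lam φ (sg b n) then 1 else 0) := by
        rw [lintegral_tsum]
        intro n
        apply Measurable.aemeasurable
        refine Measurable.const_mul (Measurable.ite ?_ measurable_const measurable_const) _
        exact measurableSet_lt ENNReal.measurable_ofReal measurable_const
    _ ≤ ∫⁻ t in Set.Ioi (0:ℝ), 2 * volume {x | ENNReal.ofReal t < φ x} := by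
        refine lintegral_mono fun t => ?_
        refine le_trans (ENNReal.tsum_le_tsum fun n => ?_) (geo_lt hb _)
        split_ifs with h1 h2 h2
        · simp
        · exact absurd (lt_meas_of_lt_lam h1) h2
        · simp
        · simp
    _ = _ := by
        rw [lintegral_const_mul' _ _ (by simp), layer hφ]

lemma lam_le {φ : ℝ → ℝ≥0∞} (hφ : Measurable φ) (hI : ∫⁻ x, φ x ≠ ⊤) {t : ℝ≥0∞} (ht : t ≠ 0)
    (ht' : t ≠ ⊤) : lam φ t ≤ (∫⁻ x, φ x) / t := by
  apply sInf_le
  by_cases h0 : ∫⁻ x, φ x = 0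
  · have h1 := (lintegral_eq_zero_iff hφ).mp h0
    have : volume {x | (∫⁻ x, φ x) / t < φ x} = 0 := by
      have h2 : volume {x | ¬ (φ x = 0)} = 0 := h1
      refine measure_mono_null (fun x hx => ?_) h2
      exact (lt_of_le_of_lt zero_le hx).ne'
    simp [this]
  · have h1 := mul_meas_ge_le_lintegral (μ := volume) hφ ((∫⁻ x, φ x) / t)
    have h2 : volume {x | (∫⁻ x, φ x) / t < φ x} ≤ volume {x | (∫⁻ x, φ x) / t ≤ φ x} :=
      measure_mono fun x hx => by
        have hx' : (∫⁻ x, φ x) / t < φ x := hx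
        exact hx'.le
    refine h2.trans ?_
    have hd0 : (∫⁻ x, φ x) / t ≠ 0 := by simp [h0, ht']
    have hdt : (∫⁻ x, φ x) / t ≠ ⊤ := ENNReal.div_ne_top hI ht
    have h3 : (∫⁻ x, φ x) / t * t = ∫⁻ x, φ x := ENNReal.div_mul_cancel ht ht'
    rw [← ENNReal.mul_le_mul_iff_right hd0 hdt, h3]
    exact h1

lemma exists_lam_lt {b : ℝ} (hb : 2 ≤ b) {φ : ℝ → ℝ≥0∞} (hφ : Measurable φ)
    (hI : ∫⁻ x, φ x ≠ ⊤) {ε : ℝ≥0∞} (hε : ε ≠ 0) (n : ℤ) : ∃ j : ℕ, lam φ (sg b (n + j)) < ε := by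
  have h1 : Filter.Tendsto (fun j : ℕ => sg b (n + j)) Filter.atTop (nhds ⊤) := by
    unfold sg
    have : Filter.Tendsto (fun j : ℕ => b ^ (n + j)) Filter.atTop Filter.atTop := by
      have h2 : ∀ j : ℕ, b ^ (n + j) = b ^ n * b ^ j := by
        intro j; rw [zpow_add₀ (by positivity), zpow_natCast]
      simp_rw [h2]
      exact Filter.Tendsto.const_mul_atTop (by positivity)
        (tendsto_pow_atTop_atTop_of_one_lt (by linarith))
    exact ENNReal.tendsto_ofReal_nhds_top.mpr this
  have h2 : Filter.Tendsto (fun j : ℕ => (∫⁻ x, φ x) / sg b (n + j)) Filter.atTop (nhds 0) := by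
    have := ENNReal.Tendsto.const_div (a := ∫⁻ x, φ x) h1 (Or.inr hI)
    simpa using this
  obtain ⟨j, hj⟩ := (h2.eventually (gt_mem_nhds (pos_iff_ne_zero.mpr hε))).exists
  exact ⟨j, (lam_le hφ hI (sg_pos hb _) (sg_ne_top _ _)).trans_lt hj⟩

/-- truncated `L²` mass -/
noncomputable def Bn (φ : ℝ → ℝ≥0∞) (l : ℝ≥0∞) : ℝ≥0∞ := (∫⁻ x, min (φ x) l ^ 2) ^ (1 / 2 : ℝ)

lemma rpow_half_sq (x : ℝ≥0∞) : (x ^ 2) ^ (1 / 2 : ℝ) = x := by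
  rw [← ENNReal.rpow_natCast, ← ENNReal.rpow_mul]; norm_num

lemma Bn_le {b : ℝ} (hb : 2 ≤ b) {φ : ℝ → ℝ≥0∞} (hφ : Measurable φ)
    (hI : ∫⁻ x, φ x ≠ ⊤) (n : ℤ) :
    Bn φ (lam φ (sg b n ^ 2)) ≤
      ∑' k : ℤ, (if n ≤ k then lam φ (sg b k ^ 2) * sg b (k + 1) else 0) := by
  set l : ℤ → ℝ≥0∞ := fun k => lam φ (sg b k ^ 2) with hl
  have hb2 : 2 ≤ b ^ 2 := by nlinarith
  have hlanti : ∀ {i j : ℤ}, i ≤ j → l j ≤ l i := fun {i j} hij =>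
    lam_anti φ (by gcongr; exact sg_mono hb hij)
  set c : ℤ → ℝ≥0∞ := fun k => (if n ≤ k then l k * sg b (k + 1) else 0) with hc
  have hpt : ∀ x, min (φ x) (l n) ^ 2 ≤
      ∑' k : ℤ, (if n ≤ k then l k ^ 2 * Set.indicator {x | l (k + 1) < φ x} 1 x else 0) := by
    intro x
    by_cases h0 : φ x = 0
    · simp [h0]
    obtain ⟨j0, hj0⟩ := exists_lam_lt hb2 hφ hI h0 (n + 1)
    have hex : ∃ j : ℕ, l (n + j + 1) < φ x := ⟨j0, by
      rw [sg_sq hb] at hj0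
      simp only [hl]
      convert hj0 using 4
      ring⟩
    classical
    set j := Nat.find hex with hj
    have hj1 : l (n + j + 1) < φ x := Nat.find_spec hex
    have hj2 : min (φ x) (l n) ≤ l (n + j) := by
      rcases Nat.eq_zero_or_pos j with h | h
      · rw [h]; simp
      · have := Nat.find_min hex (m := j - 1) (by omega)
        rw [not_lt] at this
        refine (min_le_left _ _).trans (this.trans (le_of_eq ?_))
        congr 1
        omega
    refine le_trans ?_ (ENNReal.le_tsum (n + (j : ℤ)))
    rw [if_pos (by omega), Set.indicator_of_mem (by exact hj1)]
    simp only [Pi.one_apply, mul_one]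
    gcongr
  have h1 : ∫⁻ x, min (φ x) (l n) ^ 2 ≤ ∑' k : ℤ, c k ^ 2 := by
    refine (lintegral_mono hpt).trans ?_
    rw [lintegral_tsum]
    · refine ENNReal.tsum_le_tsum fun k => ?_
      simp only [hc]
      split_ifs with hk
      · have hm : MeasurableSet {x | l (k + 1) < φ x} := measurableSet_lt measurable_const hφ
        rw [lintegral_const_mul _ (measurable_one.indicator hm), lintegral_indicator_one hm,
          mul_pow]
        gcongr
        exact meas_lam_lt φ _
      · simp
    · intro k
      apply Measurable.aemeasurable
      split_ifs
      · have hm : MeasurableSet {x | l (k + 1) < φ x} := measurableSet_lt measurable_const hφ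
        exact (measurable_one.indicator hm).const_mul _
      · exact measurable_const
  have h2 : ∑' k : ℤ, c k ^ 2 ≤ (∑' k, c k) ^ 2 := by
    rw [sq, ← ENNReal.tsum_mul_right]
    refine ENNReal.tsum_le_tsum fun k => ?_
    rw [sq]
    gcongr
    exact ENNReal.le_tsum k
  unfold Bn
  calc _ ≤ ((∑' k, c k) ^ 2) ^ (1 / 2 : ℝ) := ENNReal.rpow_le_rpow (h1.trans h2) (by norm_num)
    _ = _ := rpow_half_sq _

lemma sum_Bn {b : ℝ} (hb : 2 ≤ b) {φ : ℝ → ℝ≥0∞} (hφ : Measurable φ)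
    (hI : ∫⁻ x, φ x ≠ ⊤) :
    ∑' n : ℤ, sg b n * Bn φ (lam φ (sg b n ^ 2)) ≤ ENNReal.ofReal (4 * b) * ∫⁻ x, φ x := by
  have hb2 : 2 ≤ b ^ 2 := by nlinarith
  calc _ ≤ ∑' n : ℤ, sg b n * ∑' k : ℤ,
        (if n ≤ k then lam φ (sg b k ^ 2) * sg b (k + 1) else 0) :=
        ENNReal.tsum_le_tsum fun n => by gcongr; exact Bn_le hb hφ hI n
    _ = ∑' k : ℤ, (lam φ (sg b k ^ 2) * sg b (k + 1)) *
          ∑' n : ℤ, (if n ≤ k then sg b n else 0) := by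
        simp_rw [← ENNReal.tsum_mul_left]
        rw [ENNReal.tsum_comm]
        congr 1; ext k; congr 1; ext n
        split_ifs
        · ring
        · simp
    _ ≤ ∑' k : ℤ, (lam φ (sg b k ^ 2) * sg b (k + 1)) * (2 * sg b k) :=
        ENNReal.tsum_le_tsum fun k => by gcongr; exact geo hb k
    _ = ENNReal.ofReal (2 * b) * ∑' k : ℤ, sg (b ^ 2) k * lam φ (sg (b ^ 2) k) := by
        rw [← ENNReal.tsum_mul_left]
        congr 1; ext k
        rw [sg_succ hb, sg_sq hb, ENNReal.ofReal_mul (by norm_num)]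
        simp only [ENNReal.ofReal_ofNat]
        ring
    _ ≤ ENNReal.ofReal (2 * b) * (2 * ∫⁻ x, φ x) := by gcongr; exact sum_lam hb2 hφ
    _ = _ := by
        rw [← mul_assoc, show (2 : ℝ≥0∞) = ENNReal.ofReal 2 by simp,
          ← ENNReal.ofReal_mul (by positivity)]
        congr 2; ring

end Kol

open MeasureTheory Metric
open scoped RealInnerProductSpace ENNReal

namespace Kol

/-- sampling lemma -/
lemma sample (U N : Set ℝ) (S : ℝ) (hS : 0 < S) (hU : volume U ≤ ENNReal.ofReal S)
    (hN : volume N = 0) (k : ℕ) (y : ℝ) :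
    ∃ η : ℝ, 0 < η ∧ η ≤ (k + 1) * S ∧ ∀ i < k, y + (i + 1 : ℕ) * η ∉ U ∧ y + (i + 1 : ℕ) * η ∉ N := by
  by_contra hc
  push Not at hc
  have hsub : Set.Ioc (0:ℝ) ((k + 1) * S) ⊆
      ⋃ i ∈ Finset.range k, {η : ℝ | y + (i + 1 : ℕ) * η ∈ U ∪ N} := by
    intro η hη
    obtain ⟨i, hi, h⟩ := hc η hη.1 hη.2
    simp only [Set.mem_iUnion]
    refine ⟨i, Finset.mem_range.mpr hi, ?_⟩
    by_cases hu : y + (i + 1 : ℕ) * η ∈ U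
    · exact Or.inl hu
    · exact Or.inr (h hu)
  have hUN : volume (U ∪ N) ≤ ENNReal.ofReal S :=
    (measure_union_le _ _).trans (by rw [hN, add_zero]; exact hU)
  have hm : ∀ i : ℕ, volume {η : ℝ | y + (i + 1 : ℕ) * η ∈ U ∪ N} ≤ ENNReal.ofReal S := by
    intro i
    have e : {η : ℝ | y + (i + 1 : ℕ) * η ∈ U ∪ N}
        = (fun η => ((i + 1 : ℕ) : ℝ) * η) ⁻¹' ((fun z => y + z) ⁻¹' (U ∪ N)) := rfl
    rw [e, Real.volume_preimage_mul_left (by positivity), measure_preimage_add]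
    refine le_trans (mul_le_mul_left (b := ENNReal.ofReal _) (c := 1) ?_ _) (by simpa using hUN)
    rw [ENNReal.ofReal_le_one, abs_of_nonneg (by positivity)]
    exact inv_le_one_of_one_le₀ (by push_cast; linarith [Nat.cast_nonneg (α := ℝ) i])
  have h1 : volume (Set.Ioc (0:ℝ) ((k + 1) * S)) ≤ ∑ i ∈ Finset.range k, ENNReal.ofReal S :=
    (measure_mono hsub).trans ((measure_biUnion_finset_le _ _).trans
      (Finset.sum_le_sum fun i _ => hm i))
  rw [Real.volume_Ioc, Finset.sum_const, Finset.card_range, sub_zero, nsmul_eq_mul,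
    ← ENNReal.ofReal_natCast, ← ENNReal.ofReal_mul (by positivity),
    ENNReal.ofReal_le_ofReal_iff (by positivity)] at h1
  nlinarith

/-- extrapolation -/
noncomputable def Ex (k : ℕ) (η : ℝ) (v : ℝ → ℂ) (y : ℝ) : ℂ :=
  ∑ i ∈ Finset.range k, (-((-1) ^ (i + 1) * (k.choose (i + 1) : ℂ))) * v (y + (i + 1 : ℕ) * η)

lemma sub_Ex (k : ℕ) (η : ℝ) (v : ℝ → ℂ) (y : ℝ) :
    v y - Ex k η v y = (-1) ^ k * (fwdDiff η)^[k] v y := by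
  rw [fwdDiff_iter_eq_sum_shift, Finset.sum_range_succ', Ex, mul_add, Finset.mul_sum, add_comm,
    sub_eq_add_neg, ← Finset.sum_neg_distrib]
  congr 1
  · simp only [Nat.sub_zero, Nat.choose_zero_right, Nat.cast_one, mul_one, zero_smul, add_zero,
      zsmul_eq_mul]
    push_cast
    rw [← mul_assoc, ← mul_pow]; simp
  · refine Finset.sum_congr rfl fun i hi => ?_
    have hi' : i + 1 ≤ k := Finset.mem_range.mp hi
    obtain ⟨m, rfl⟩ := Nat.exists_eq_add_of_le hi'
    simp only [Nat.add_sub_cancel_left, zsmul_eq_mul, nsmul_eq_mul]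
    push_cast
    rw [pow_add]
    have : ((-1 : ℂ) ^ m) * (-1) ^ m = 1 := by rw [← mul_pow]; simp
    linear_combination (-((-1 : ℂ) ^ (i + 1)) * ((i + 1 + m).choose (i + 1) : ℂ) *
      v (y + ((i:ℝ) + 1) * η)) * this

lemma coef_sum (k : ℕ) :
    ∑ i ∈ Finset.range k, ‖(-((-1) ^ (i + 1) * (k.choose (i + 1) : ℂ)))‖ₑ ≤ 2 ^ k := by
  have h1 : ∀ i, ‖(-((-1) ^ (i + 1) * (k.choose (i + 1) : ℂ)))‖ₑ = (k.choose (i + 1) : ℝ≥0∞) := by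
    intro i
    rw [enorm_neg, enorm_mul, enorm_pow, enorm_neg, enorm_one, one_pow, one_mul, ← ofReal_norm,
      Complex.norm_natCast, ENNReal.ofReal_natCast]
  simp_rw [h1]
  rw [← Nat.cast_sum]
  have h2 := Nat.sum_range_choose k
  rw [Finset.sum_range_succ'] at h2
  have h3 : ∑ i ∈ Finset.range k, k.choose (i + 1) ≤ 2 ^ k := by omega
  exact_mod_cast h3

/-- nice functions -/
def Nice (p : ℕ) (l : ℝ≥0∞) (w : ℝ → ℂ) : Prop :=
  ContDiff ℝ p w ∧ Integrable w ∧ ∫⁻ x, ‖iteratedDeriv p w x‖ₑ ≤ l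

lemma Nice.mono {p : ℕ} {l l' : ℝ≥0∞} {w : ℝ → ℂ} (h : Nice p l w) (hl : l ≤ l') : Nice p l' w :=
  ⟨h.1, h.2.1, h.2.2.trans hl⟩

lemma Nice.add {p : ℕ} {l l' : ℝ≥0∞} {w w' : ℝ → ℂ} (h : Nice p l w) (h' : Nice p l' w') :
    Nice p (l + l') (fun x => w x + w' x) := by
  refine ⟨h.1.add h'.1, h.2.1.add h'.2.1, ?_⟩
  have hm : Measurable (fun x => ‖iteratedDeriv p w x‖ₑ) :=
    (h.1.continuous_iteratedDeriv p le_rfl).measurable.enorm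
  calc _ ≤ ∫⁻ x, (‖iteratedDeriv p w x‖ₑ + ‖iteratedDeriv p w' x‖ₑ) := by
        refine lintegral_mono fun x => ?_
        rw [iteratedDeriv_fun_add h.1.contDiffAt h'.1.contDiffAt]
        exact enorm_add_le _ _
    _ = _ := lintegral_add_left hm _
    _ ≤ _ := add_le_add h.2.2 h'.2.2

lemma Nice.smul {p : ℕ} {l : ℝ≥0∞} {w : ℝ → ℂ} (h : Nice p l w) (c : ℂ) :
    Nice p (‖c‖ₑ * l) (fun x => c * w x) := by
  refine ⟨contDiff_const.mul h.1, h.2.1.const_mul c, ?_⟩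
  have hm : Measurable (fun x => ‖iteratedDeriv p w x‖ₑ) :=
    (h.1.continuous_iteratedDeriv p le_rfl).measurable.enorm
  calc _ = ∫⁻ x, ‖c‖ₑ * ‖iteratedDeriv p w x‖ₑ := by
        congr 1; ext x
        rw [iteratedDeriv_const_mul_field, enorm_mul]
    _ = _ := lintegral_const_mul _ hm
    _ ≤ _ := by gcongr; exact h.2.2

lemma Nice.sub {p : ℕ} {l l' : ℝ≥0∞} {w w' : ℝ → ℂ} (h : Nice p l w) (h' : Nice p l' w') :
    Nice p (l + l') (fun x => w x - w' x) := by
  have := h.add (h'.smul (-1))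
  simpa [sub_eq_add_neg] using this

lemma Nice.sum {p : ℕ} {l : ℝ≥0∞} (c : ℕ → ℂ) (w : ℕ → ℝ → ℂ) (k : ℕ)
    (h : ∀ i < k, Nice p l (w i)) :
    Nice p ((∑ i ∈ Finset.range k, ‖c i‖ₑ) * l) (fun x => ∑ i ∈ Finset.range k, c i * w i x) := by
  induction k with
  | zero =>
    simp only [Finset.range_zero, Finset.sum_empty, zero_mul]
    refine ⟨contDiff_const, integrable_zero _ _ _, ?_⟩
    rw [show (fun _ : ℝ => (0:ℂ)) = fun x : ℝ => (0:ℂ) * (0:ℂ) by simp]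
    simp
  | succ k ih =>
    simp_rw [Finset.sum_range_succ, add_mul]
    exact (ih fun i hi => h i (by omega)).add ((h k (by omega)).smul _)

lemma Nice.measurable {p : ℕ} {l : ℝ≥0∞} {w : ℝ → ℂ} (h : Nice p l w) : Measurable w :=
  h.1.continuous.measurable

/-- L² bound -/
lemma L2_bound {p' : ℕ} {l : ℝ≥0∞} {D : ℝ → ℂ} (hD : Nice (p' + 1) l D) {ψ : ℝ → ℝ≥0∞}
    (hψ : Measurable ψ) {A M : ℝ≥0∞} {h : ℝ} (hh : 0 < h)
    (hV : volume {x | A < ψ x} ≤ ENNReal.ofReal h)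
    (hb : ∀ᵐ x, ‖D x‖ₑ ≤ M * ψ x) :
    (∫⁻ x, ‖D x‖ₑ ^ 2) ^ (1 / 2 : ℝ) ≤ 2 ^ p' * M * Bn ψ A +
      ENNReal.ofReal (Real.sqrt h) * (ENNReal.ofReal ((p' + 1) * h) ^ p' * l) := by
  set V := {x | A < ψ x} with hVd
  have hVm : MeasurableSet V := measurableSet_lt measurable_const hψ
  set E := ENNReal.ofReal ((p' + 1) * h) ^ p' * l with hE
  have hpt : ∀ᵐ x, ‖D x‖ₑ ≤ 2 ^ p' * M * min (ψ x) A + V.indicator (fun _ => E) x := by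
    filter_upwards [hb] with x hx
    by_cases hxV : x ∈ V
    · have hAψ : A < ψ x := hxV
      rw [min_eq_right hAψ.le, Set.indicator_of_mem hxV]
      obtain ⟨t, ht0, ht, htU⟩ := sample V {x | ¬ (‖D x‖ₑ ≤ M * ψ x)} h hh hV hb p' x
      have e : D x = Ex p' t D x + (-1) ^ p' * (fwdDiff t)^[p'] D x := by
        rw [← sub_Ex]; ring
      rw [e]
      refine (enorm_add_le _ _).trans (add_le_add ?_ ?_)
      · unfold Ex
        refine (enorm_sum_le _ _).trans ?_
        calc _ ≤ ∑ i ∈ Finset.range p', ‖(-((-1) ^ (i + 1) * (p'.choose (i + 1) : ℂ)))‖ₑ * (M * A) := by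
              refine Finset.sum_le_sum fun i hi => ?_
              rw [enorm_mul]
              gcongr
              obtain ⟨h1, h2⟩ := htU i (Finset.mem_range.mp hi)
              have h2' : ‖D (x + (i + 1 : ℕ) * t)‖ₑ ≤ M * ψ (x + (i + 1 : ℕ) * t) := by
                by_contra hcc; exact h2 hcc
              have h1' : ψ (x + (i + 1 : ℕ) * t) ≤ A := by
                by_contra hcc; exact h1 (not_le.mp hcc)
              exact h2'.trans (by gcongr)
          _ ≤ _ := by
              rw [← Finset.sum_mul, mul_assoc]
              gcongr
              exact coef_sum p'
      · rw [enorm_mul, enorm_pow, enorm_neg, enorm_one, one_pow, one_mul]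
        refine (diff_sup p' t hD.1 hD.2.1 x).trans ?_
        rw [hE, abs_of_pos ht0]
        gcongr
        exact hD.2.2
    · have hAψ : ψ x ≤ A := by by_contra hcc; exact hxV (not_le.mp hcc)
      rw [min_eq_left hAψ, Set.indicator_of_notMem hxV, add_zero]
      refine hx.trans ?_
      gcongr
      exact le_mul_of_one_le_left zero_le (one_le_pow₀ (by norm_num))
  have hf : Measurable (fun x => 2 ^ p' * M * min (ψ x) A) := (hψ.min measurable_const).const_mul _
  have hg : Measurable (V.indicator (fun _ => E)) := measurable_const.indicator hVm
  have key := ENNReal.lintegral_Lp_add_le (μ := volume) hf.aemeasurable hg.aemeasurable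
    (p := 2) (by norm_num)
  simp only [Pi.add_apply, ENNReal.rpow_two] at key
  calc _ ≤ (∫⁻ x, (2 ^ p' * M * min (ψ x) A + V.indicator (fun _ => E) x) ^ 2) ^ (1 / 2 : ℝ) := by
        gcongr ?_ ^ _
        refine lintegral_mono_ae ?_
        filter_upwards [hpt] with x hx
        gcongr
    _ ≤ _ := key
    _ ≤ _ := by
        refine add_le_add ?_ ?_
        · simp_rw [mul_pow _ (min _ _)]
          rw [lintegral_const_mul _ ((hψ.min measurable_const).pow_const 2),
            ENNReal.mul_rpow_of_nonneg _ _ (by norm_num), rpow_half_sq]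
          rfl
        · have e : ∀ x, V.indicator (fun _ => E) x ^ 2 = V.indicator (fun _ => E ^ 2) x := by
            intro x; by_cases hx : x ∈ V <;> simp [hx]
          simp_rw [e]
          rw [lintegral_indicator_const hVm, ENNReal.mul_rpow_of_nonneg _ _ (by norm_num),
            rpow_half_sq, mul_comm]
          gcongr
          rw [Real.sqrt_eq_rpow, ← ENNReal.ofReal_rpow_of_pos hh]
          gcongr
end Kol

open MeasureTheory Metric
open scoped RealInnerProductSpace ENNReal

namespace Kol

noncomputable def phi (p : ℕ) (u : ℝ → ℝ → ℂ) (y : ℝ) : ℝ≥0∞ :=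
  ∫⁻ x, ‖iteratedDeriv p (fun x => u x y) x‖ₑ

noncomputable def psi (q : ℕ) (u : ℝ → ℝ → ℂ) (x : ℝ) : ℝ≥0∞ :=
  ∫⁻ y, ‖iteratedDeriv q (u x) y‖ₑ

/-- hypotheses on a function of two variables -/
structure Dat (p' q' : ℕ) (u : ℝ → ℝ → ℂ) : Prop where
  cont : Continuous (fun w : ℝ × ℝ => u w.1 w.2)
  int : Integrable (fun w : ℝ × ℝ => u w.1 w.2) (volume.prod volume)
  cx : ∀ y, ContDiff ℝ (p' + 1 : ℕ) (fun x => u x y)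
  cy : ∀ x, ContDiff ℝ (q' + 1 : ℕ) (u x)
  mφ : Measurable (phi (p' + 1) u)
  mψ : Measurable (psi (q' + 1) u)

lemma approx {p' q' : ℕ} {u : ℝ → ℝ → ℂ} (D : Dat p' q' u) {y : ℝ}
    (hy : Integrable (fun x => u x y)) {s : ℝ} (hs : 0 < s) {l : ℝ≥0∞}
    (hU : volume {y | l < phi (p' + 1) u y} ≤ ENNReal.ofReal s) :
    ∃ w : ℝ → ℂ, Nice (p' + 1) (2 ^ q' * l) w ∧
      (∀ x, Integrable (u x) →
        ‖u x y - w x‖ₑ ≤ ENNReal.ofReal ((q' + 1) * s) ^ q' * psi (q' + 1) u x) ∧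
      (¬ l < phi (p' + 1) u y → w = fun x => u x y) := by
  by_cases hly : l < phi (p' + 1) u y
  · have hN : ∀ᵐ y, Integrable (fun x => u x y) := D.int.prod_left_ae
    obtain ⟨η, hη0, hη, hηU⟩ := sample {y | l < phi (p' + 1) u y}
      {y | ¬ Integrable (fun x => u x y) volume} s hs hU hN q' y
    refine ⟨fun x => Ex q' η (u x) y, ?_, ?_, fun h => absurd hly h⟩
    · unfold Ex
      refine (Nice.sum (l := l) _ (fun i x => u x (y + (i + 1 : ℕ) * η)) q' ?_).mono ?_
      · intro i hi
        obtain ⟨h1, h2⟩ := hηU i hi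
        refine ⟨D.cx _, ?_, ?_⟩
        · by_contra hcc; exact h2 hcc
        · by_contra hcc; exact h1 (not_le.mp hcc)
      · gcongr
        exact coef_sum q'
    · intro x hx
      rw [sub_Ex, enorm_mul, enorm_pow, enorm_neg, enorm_one, one_pow, one_mul]
      refine (diff_sup q' η (D.cy x) hx y).trans ?_
      rw [abs_of_pos hη0]
      unfold psi
      gcongr
  · refine ⟨fun x => u x y, ⟨D.cx y, hy, ?_⟩, ?_, fun _ => rfl⟩
    · refine (not_lt.mp hly).trans ?_
      exact le_mul_of_one_le_left zero_le (one_le_pow₀ (by norm_num))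
    · intro x _; simp

/-- dyadic shells -/
def Shell (H : ℝ) (n : ℤ) : Set ℝ := {ξ | 1 / H ^ (n + 1) < |ξ| ∧ |ξ| ≤ 1 / H ^ n}

lemma mem_Shell {H : ℝ} {n : ℤ} {ξ : ℝ} :
    ξ ∈ Shell H n ↔ 1 / H ^ (n + 1) < |ξ| ∧ |ξ| ≤ 1 / H ^ n := Iff.rfl

lemma measurableSet_Shell (H : ℝ) (n : ℤ) : MeasurableSet (Shell H n) := by
  have h : Measurable (fun ξ : ℝ => |ξ|) := continuous_abs.measurable
  exact (measurableSet_lt measurable_const h).inter (measurableSet_le h measurable_const)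

lemma Shell_sub (H : ℝ) (n : ℤ) : Shell H n ⊆ Set.Icc (-(1 / H ^ n)) (1 / H ^ n) :=
  fun _ h => abs_le.mp h.2

lemma volume_Shell_le (H : ℝ) (n : ℤ) : volume (Shell H n) ≤ ENNReal.ofReal (2 / H ^ n) := by
  refine (measure_mono (Shell_sub H n)).trans (le_of_eq ?_)
  rw [Real.volume_Icc]; congr 1; ring

lemma Shell_disj {H : ℝ} (hH : 2 ≤ H) : Pairwise (Function.onFun Disjoint (Shell H)) := by
  have key : ∀ n m : ℤ, n < m → Disjoint (Shell H n) (Shell H m) := by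
    intro n m hnm
    rw [Set.disjoint_left]
    rintro ξ h1 h2
    have h3 : H ^ (n + 1) ≤ H ^ m := zpow_le_zpow_right₀ (by linarith) (by omega)
    have h4 : 1 / H ^ m ≤ 1 / H ^ (n + 1) := one_div_le_one_div_of_le (by positivity) h3
    exact absurd (h2.2.trans h4) (not_le.mpr h1.1)
  intro n m hnm
  rcases lt_or_gt_of_ne hnm with h | h
  · exact key n m h
  · exact (key m n h).symm

lemma shell_sum {H : ℝ} (hH : 2 ≤ H) (k : ℤ) (g : ℝ → ℝ≥0∞) :
    ∑' n : ℤ, (if k ≤ n then ∫⁻ ξ in Shell H n, g ξ else 0)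
      ≤ ∫⁻ ξ in Set.Icc (-(1 / H ^ k)) (1 / H ^ k), g ξ := by
  classical
  have h1 : ∀ n : ℤ, (if k ≤ n then ∫⁻ ξ in Shell H n, g ξ else 0)
      = ∫⁻ ξ in (if k ≤ n then Shell H n else ∅), g ξ := by
    intro n; split_ifs <;> simp
  simp_rw [h1]
  rw [← lintegral_iUnion]
  · refine lintegral_mono_set ?_
    refine Set.iUnion_subset fun n => ?_
    split_ifs with h
    · refine (Shell_sub H n).trans ?_
      have h3 : H ^ k ≤ H ^ n := zpow_le_zpow_right₀ (by linarith) h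
      have h4 : 1 / H ^ n ≤ 1 / H ^ k := one_div_le_one_div_of_le (by positivity) h3
      exact Set.Icc_subset_Icc (by linarith) h4
    · simp
  · intro n; split_ifs
    · exact measurableSet_Shell H n
    · exact MeasurableSet.empty
  · intro n m hnm
    have := Shell_disj hH hnm
    simp only [Function.onFun] at this ⊢
    split_ifs <;> simp [this]

lemma FT_sub {v w : ℝ → ℂ} (hv : Integrable v) (hw : Integrable w) (ξ : ℝ) :
    FT (fun x => v x - w x) ξ = FT v ξ - FT w ξ := by
  unfold FT
  simp_rw [mul_sub]
  exact integral_sub (integrable_ek_mul hv ξ) (integrable_ek_mul hw ξ)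

lemma telescope {U : ℤ → Prop} [DecidablePred U] {w : ℤ → ℝ → ℂ} {v : ℝ → ℂ}
    (hw : ∀ n, Integrable (w n)) (hU : ∀ n, ¬ U n → w n = v) (k₀ : ℤ) (hk : ¬ U k₀)
    (ξ : ℝ) (n : ℤ) (hn : k₀ ≤ n) :
    ‖FT v ξ‖ₑ ≤ ‖FT (w n) ξ‖ₑ +
      ∑' k : ℤ, (if k ≤ n ∧ U k then ‖FT (fun x => w (k - 1) x - w k x) ξ‖ₑ else 0) := by
  induction n, hn using Int.leInduction with
  | base => rw [hU k₀ hk]; exact le_self_add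
  | succ n hn ih =>
    by_cases hun : U (n + 1)
    · refine ih.trans ?_
      have h1 : ‖FT (w n) ξ‖ₑ ≤ ‖FT (w (n + 1)) ξ‖ₑ +
          ‖FT (fun x => w (n + 1 - 1) x - w (n + 1) x) ξ‖ₑ := by
        rw [add_sub_cancel_right, FT_sub (hw n) (hw (n + 1))]
        refine le_trans (le_of_eq ?_) (enorm_add_le _ _)
        congr 1; ring
      refine (add_le_add_left h1 _).trans ?_
      rw [add_assoc]
      refine add_le_add_right ?_ _
      rw [← tsum_ite_eq (n + 1) (fun k => ‖FT (fun x => w (k - 1) x - w k x) ξ‖ₑ),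
        ← ENNReal.tsum_add]
      refine ENNReal.tsum_le_tsum fun k => ?_
      by_cases hk1 : k = n + 1
      · subst hk1; simp [hun]
      · rw [if_neg hk1, zero_add]
        by_cases hk2 : k ≤ n ∧ U k
        · rw [if_pos hk2, if_pos ⟨by omega, hk2.2⟩]
        · rw [if_neg hk2]; exact zero_le
    · rw [hU _ hun]; exact le_self_add

end Kol

open MeasureTheory Metric
open scoped RealInnerProductSpace ENNReal

namespace Kol

/-- constant -/
noncomputable def K1 (p' q' : ℕ) (a : ℝ) : ℝ≥0∞ := ENNReal.ofReal (2 * (2 * a ^ 2) ^ (p' + 1)) * 2 ^ q'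
noncomputable def K2 (p' q' : ℕ) : ℝ≥0∞ := ENNReal.ofReal (8 * 2 ^ p' * (2 * (q' + 1) ^ q'))
noncomputable def K3 (p' q' : ℕ) : ℝ≥0∞ := ENNReal.ofReal (8 * (p' + 1) ^ p' * (2 ^ q' * 2))

/-- the summands -/
noncomputable def kap (p' q' : ℕ) (a b : ℝ) (u : ℝ → ℝ → ℂ) (n : ℤ) : ℝ≥0∞ :=
  lam (phi (p' + 1) u) (sg (b ^ 2) (n - 1)) +
    ENNReal.ofReal (a ^ n / (b ^ 2) ^ n) * Bn (psi (q' + 1) u) (lam (psi (q' + 1) u) (sg (a ^ 2) n))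

lemma sq_zpow_sqrt {a : ℝ} (ha : 2 ≤ a) (n : ℤ) : Real.sqrt ((a ^ 2) ^ n) = a ^ n := by
  have : (a ^ 2) ^ n = (a ^ n) ^ 2 := by
    rw [← zpow_natCast, ← zpow_natCast, ← zpow_mul, ← zpow_mul, mul_comm]
  rw [this, Real.sqrt_sq (by positivity)]

lemma first_term {p' q' : ℕ} {a : ℝ} (ha : 2 ≤ a) {l : ℝ≥0∞} {w : ℝ → ℂ}
    (hw : Nice (p' + 1) (2 ^ q' * l) w) (n : ℤ) :
    ENNReal.ofReal (1 / ((a ^ 2) ^ n) ^ p') * ∫⁻ ξ in Shell (a ^ 2) n, ‖FT w ξ‖ₑ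
      ≤ K1 p' q' a * l := by
  set h := (a ^ 2) ^ n with hh
  have hpos : 0 < h := by positivity
  have hpt : ∀ ξ ∈ Shell (a ^ 2) n, ‖FT w ξ‖ₑ
      ≤ ENNReal.ofReal ((2 * (a ^ 2 * h)) ^ (p' + 1)) * (2 ^ q' * l) := by
    intro ξ hξ
    have h1 : (a ^ 2) ^ (n + 1) = a ^ 2 * h := by rw [zpow_add_one₀ (by positivity), mul_comm]
    have h2 := hξ.1
    rw [h1] at h2
    have h3 : 0 < |ξ| := lt_trans (by positivity) h2
    refine (FT_decay (p' + 1) hw.1 hw.2.1 (abs_pos.mp h3)).trans ?_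
    gcongr
    · rw [div_le_iff₀ h3]
      rw [div_lt_iff₀ (by positivity)] at h2
      nlinarith
    · exact hw.2.2
  calc _ ≤ ENNReal.ofReal (1 / h ^ p') *
        (ENNReal.ofReal ((2 * (a ^ 2 * h)) ^ (p' + 1)) * (2 ^ q' * l) * ENNReal.ofReal (2 / h)) := by
        gcongr
        refine (setLIntegral_mono' (measurableSet_Shell _ _) hpt).trans ?_
        rw [setLIntegral_const]
        gcongr
        exact volume_Shell_le _ _
    _ = ENNReal.ofReal (1 / h ^ p') * ENNReal.ofReal ((2 * (a ^ 2 * h)) ^ (p' + 1)) *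
          ENNReal.ofReal (2 / h) * 2 ^ q' * l := by ring
    _ = _ := by
        rw [← ENNReal.ofReal_mul (by positivity), ← ENNReal.ofReal_mul (by positivity), K1]
        congr 3
        rw [show 2 * (a ^ 2 * h) = (2 * a ^ 2) * h by ring, mul_pow _ h, pow_succ h]
        field_simp

lemma second_term {p' q' : ℕ} {a b : ℝ} (ha : 2 ≤ a) (hb : 2 ≤ b) (hab : a ^ (p' + 1) = b ^ (q' + 1))
    {l : ℝ≥0∞} {D : ℝ → ℂ} (hD : Nice (p' + 1) (2 ^ q' * 2 * l) D) (k : ℤ) {ψ : ℝ → ℝ≥0∞}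
    (hψ : Measurable ψ)
    (hb' : ∀ᵐ x, ‖D x‖ₑ ≤ 2 * ENNReal.ofReal ((q' + 1) * (b ^ 2) ^ k) ^ q' * ψ x) :
    ENNReal.ofReal (1 / ((a ^ 2) ^ k) ^ p') *
        ∫⁻ ξ in Set.Icc (-(1 / (a ^ 2) ^ k)) (1 / (a ^ 2) ^ k), ‖FT D ξ‖ₑ
      ≤ K2 p' q' * (ENNReal.ofReal (a ^ k / (b ^ 2) ^ k) * Bn ψ (lam ψ (sg (a ^ 2) k))) +
        K3 p' q' * l := by
  have h1 := bessel hD.measurable hD.2.1 (1 / (a ^ 2) ^ k) (by positivity)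
  have h2 := L2_bound hD hψ (A := lam ψ (sg (a ^ 2) k)) (h := (a ^ 2) ^ k) (by positivity)
    (meas_lam_lt _ _) hb'
  rw [sq_zpow_sqrt ha] at h2
  have e1 : Real.sqrt (1 / (a ^ 2) ^ k) = 1 / a ^ k := by
    rw [Real.sqrt_div zero_le_one, Real.sqrt_one, sq_zpow_sqrt ha]
  rw [e1] at h1
  have esq : ∀ c : ℝ, (c ^ 2) ^ k = (c ^ k) ^ 2 := by
    intro c; rw [← zpow_natCast, ← zpow_natCast, ← zpow_mul, ← zpow_mul, mul_comm]
  have hab' : (a ^ k) ^ (p' + 1) = (b ^ k) ^ (q' + 1) := by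
    have : (a ^ (p' + 1)) ^ k = (b ^ (q' + 1)) ^ k := by rw [hab]
    rw [← zpow_natCast, ← zpow_natCast] at this ⊢
    rw [← zpow_mul, ← zpow_mul] at this ⊢
    rw [mul_comm k, mul_comm k]; exact this
  rw [esq a] at h1 h2 ⊢
  rw [esq b] at h2 ⊢
  set α := a ^ k with hα
  set β := b ^ k with hβ
  have hαp : 0 < α := by positivity
  have hβp : 0 < β := by positivity
  calc _ ≤ ENNReal.ofReal (1 / (α ^ 2) ^ p') * (ENNReal.ofReal (8 * (1 / α)) *
        (2 ^ p' * (2 * ENNReal.ofReal ((q' + 1) * β ^ 2) ^ q') * Bn ψ (lam ψ (sg (a ^ 2) k)) +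
      ENNReal.ofReal α * (ENNReal.ofReal ((p' + 1) * α ^ 2) ^ p' * (2 ^ q' * 2 * l)))) := by
        gcongr
        refine h1.trans ?_
        gcongr
    _ = (ENNReal.ofReal (1 / (α ^ 2) ^ p') * ENNReal.ofReal (8 * (1 / α)) *
          ENNReal.ofReal (2 ^ p') * ENNReal.ofReal 2 * ENNReal.ofReal (((q' + 1) * β ^ 2) ^ q')) *
          Bn ψ (lam ψ (sg (a ^ 2) k)) +
        (ENNReal.ofReal (1 / (α ^ 2) ^ p') * ENNReal.ofReal (8 * (1 / α)) * ENNReal.ofReal α *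
          ENNReal.ofReal (((p' + 1) * α ^ 2) ^ p') * ENNReal.ofReal (2 ^ q' * 2)) * l := by
        rw [ENNReal.ofReal_mul (p := 2 ^ q') (by positivity),
          ENNReal.ofReal_pow (p := 2) (by norm_num), ENNReal.ofReal_pow (p := 2) (by norm_num),
          ENNReal.ofReal_pow (by positivity) q', ENNReal.ofReal_pow (by positivity) p']
        simp only [ENNReal.ofReal_ofNat]
        ring
    _ = _ := by
        rw [← mul_assoc (K2 p' q'), K2, K3]
        repeat rw [← ENNReal.ofReal_mul (by positivity)]
        congr 3
        · have : (α ^ 2) ^ (p' + 1) = (β ^ 2) ^ (q' + 1) := by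
            rw [← pow_mul, ← pow_mul, mul_comm 2, mul_comm 2, pow_mul, pow_mul, hab']
          have h5 : (α ^ 2) ^ p' = (β ^ 2) ^ (q' + 1) / α ^ 2 := by
            rw [← this, pow_succ (α ^ 2) p', mul_div_cancel_right₀ _ (by positivity)]
          rw [h5, mul_pow]
          field_simp
          ring
        · rw [mul_pow]
          field_simp

lemma pointwise {p' q' : ℕ} {a b : ℝ} (ha : 2 ≤ a) (hb : 2 ≤ b) (hab : a ^ (p' + 1) = b ^ (q' + 1))
    {u : ℝ → ℝ → ℂ} (D : Dat p' q' u) {y : ℝ} (hy : Integrable (fun x => u x y)) (U : ℤ → Prop)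
    [DecidablePred U] (hU : ∀ n, U n ↔ lam (phi (p' + 1) u) (sg (b ^ 2) n) < phi (p' + 1) u y)
    {k₀ : ℤ} (hk : ¬ U k₀) :
    ∑' n : ℤ, (if U n then ENNReal.ofReal (1 / ((a ^ 2) ^ n) ^ p') *
        ∫⁻ ξ in Shell (a ^ 2) n, ‖FT (fun x => u x y) ξ‖ₑ else 0)
      ≤ (K1 p' q' a + K2 p' q' + K3 p' q') * ∑' n : ℤ, (if U n then kap p' q' a b u n else 0) := by
  have ha2 : 2 ≤ a ^ 2 := by nlinarith
  have hb2 : 2 ≤ b ^ 2 := by nlinarith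
  set φ := phi (p' + 1) u with hφd
  set ψ := psi (q' + 1) u with hψd
  set c : ℤ → ℝ≥0∞ := fun n => lam φ (sg (b ^ 2) n) with hc
  have hcm : ∀ {n m : ℤ}, n ≤ m → c m ≤ c n := fun h => lam_anti _ (sg_mono hb2 h)
  have hUm : ∀ {n m : ℤ}, n ≤ m → U n → U m := fun h h1 =>
    (hU _).mpr (lt_of_le_of_lt (hcm h) ((hU _).mp h1))
  have hap : ∀ n : ℤ, ∃ w : ℝ → ℂ, Nice (p' + 1) (2 ^ q' * c n) w ∧
      (∀ x, Integrable (u x) →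
        ‖u x y - w x‖ₑ ≤ ENNReal.ofReal ((q' + 1) * (b ^ 2) ^ n) ^ q' * ψ x) ∧
      (¬ c n < φ y → w = fun x => u x y) := fun n =>
    approx D hy (by positivity) (meas_lam_lt _ _)
  choose w hw1 hw2 hw3 using hap
  have hgood : ∀ᵐ x, Integrable (u x) := D.int.prod_right_ae
  set Dk : ℤ → ℝ → ℂ := fun k x => w (k - 1) x - w k x with hDk
  have hDn : ∀ k, Nice (p' + 1) (2 ^ q' * 2 * c (k - 1)) (Dk k) := by
    intro k
    refine ((hw1 (k - 1)).sub (hw1 k)).mono ?_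
    have := hcm (show k - 1 ≤ k by omega)
    calc _ ≤ 2 ^ q' * c (k - 1) + 2 ^ q' * c (k - 1) := by gcongr
      _ = _ := by ring
  have hDb : ∀ k, ∀ᵐ x, ‖Dk k x‖ₑ ≤ 2 * ENNReal.ofReal ((q' + 1) * (b ^ 2) ^ k) ^ q' * ψ x := by
    intro k
    filter_upwards [hgood] with x hx
    have h1 := hw2 (k - 1) x hx
    have h2 := hw2 k x hx
    have h3 : (b ^ 2) ^ (k - 1) ≤ (b ^ 2) ^ k := zpow_le_zpow_right₀ (by linarith) (by omega)
    have e : Dk k x = (u x y - w k x) - (u x y - w (k - 1) x) := by simp only [hDk]; ring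
    rw [e, mul_assoc, two_mul]
    refine (enorm_sub_le).trans (add_le_add h2 (h1.trans ?_))
    gcongr
  have htel : ∀ n, U n → ∀ ξ, ‖FT (fun x => u x y) ξ‖ₑ ≤ ‖FT (w n) ξ‖ₑ +
      ∑' k : ℤ, (if k ≤ n ∧ U k then ‖FT (Dk k) ξ‖ₑ else 0) := by
    intro n hn ξ
    refine telescope (fun n => (hw1 n).2.1) (fun n h => hw3 n (fun h' => h ((hU n).mpr h'))) k₀ hk ξ n ?_
    by_contra hlt
    exact hk (hUm (by omega) hn)
  have hmeas : ∀ k, Measurable fun ξ => ‖FT (Dk k) ξ‖ₑ := fun k =>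
    (measurable_FT (hDn k).measurable).enorm
  set W : ℤ → ℝ≥0∞ := fun n => ENNReal.ofReal (1 / ((a ^ 2) ^ n) ^ p') with hW
  have hWm : ∀ {k n : ℤ}, k ≤ n → W n ≤ W k := by
    intro k n h
    simp only [hW]
    gcongr
    linarith
  have step1 : ∀ n, (if U n then W n * ∫⁻ ξ in Shell (a ^ 2) n, ‖FT (fun x => u x y) ξ‖ₑ else 0)
      ≤ K1 p' q' a * (if U n then kap p' q' a b u n else 0) +
        ∑' k : ℤ, (if U k then W k * (if k ≤ n then ∫⁻ ξ in Shell (a ^ 2) n, ‖FT (Dk k) ξ‖ₑ else 0)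
          else 0) := by
    intro n
    by_cases hn : U n
    · rw [if_pos hn, if_pos hn]
      calc _ ≤ W n * ∫⁻ ξ in Shell (a ^ 2) n, (‖FT (w n) ξ‖ₑ +
            ∑' k : ℤ, (if k ≤ n ∧ U k then ‖FT (Dk k) ξ‖ₑ else 0)) := by
            gcongr with ξ
            exact htel n hn ξ
        _ = W n * (∫⁻ ξ in Shell (a ^ 2) n, ‖FT (w n) ξ‖ₑ) +
            W n * ∑' k : ℤ, ∫⁻ ξ in Shell (a ^ 2) n, (if k ≤ n ∧ U k then ‖FT (Dk k) ξ‖ₑ else 0) := by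
            rw [lintegral_add_left (measurable_FT (hw1 n).measurable).enorm, mul_add,
              lintegral_tsum]
            intro k
            split_ifs
            · exact (hmeas k).aemeasurable
            · exact aemeasurable_const
        _ ≤ _ := by
            refine add_le_add ?_ ?_
            · refine (first_term ha (hw1 n) n).trans ?_
              gcongr
              exact (hcm (show n - 1 ≤ n by omega)).trans le_self_add
            · rw [← ENNReal.tsum_mul_left]
              refine ENNReal.tsum_le_tsum fun k => ?_
              by_cases hk1 : k ≤ n
              · by_cases hk2 : U k
                · simp only [hk1, hk2, and_self, if_true]
                  gcongr
                  exact hWm hk1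
                · simp [hk2]
              · simp [hk1]
    · rw [if_neg hn]; exact zero_le
  have step2 : ∀ k, (∑' n : ℤ, (if U k then W k * (if k ≤ n then ∫⁻ ξ in Shell (a ^ 2) n, ‖FT (Dk k) ξ‖ₑ else 0)
          else 0)) ≤ (K2 p' q' + K3 p' q') * (if U k then kap p' q' a b u k else 0) := by
    intro k
    by_cases hk1 : U k
    · simp only [if_pos hk1]
      rw [ENNReal.tsum_mul_left]
      calc _ ≤ W k * ∫⁻ ξ in Set.Icc (-(1 / (a ^ 2) ^ k)) (1 / (a ^ 2) ^ k), ‖FT (Dk k) ξ‖ₑ := by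
            gcongr
            exact shell_sum ha2 k _
        _ ≤ _ := second_term ha hb hab (hDn k) k D.mψ (hDb k)
        _ ≤ _ := by
            rw [kap, add_mul]
            refine add_le_add ?_ ?_
            · gcongr
              exact le_add_self
            · gcongr
              exact le_self_add
    · simp [hk1]
  calc _ ≤ ∑' n : ℤ, (K1 p' q' a * (if U n then kap p' q' a b u n else 0) +
        ∑' k : ℤ, (if U k then W k * (if k ≤ n then ∫⁻ ξ in Shell (a ^ 2) n, ‖FT (Dk k) ξ‖ₑ else 0)
          else 0)) := ENNReal.tsum_le_tsum step1
    _ = K1 p' q' a * (∑' n : ℤ, (if U n then kap p' q' a b u n else 0)) +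
        ∑' k : ℤ, ∑' n : ℤ, (if U k then W k *
          (if k ≤ n then ∫⁻ ξ in Shell (a ^ 2) n, ‖FT (Dk k) ξ‖ₑ else 0) else 0) := by
        rw [ENNReal.tsum_add, ENNReal.tsum_mul_left, ENNReal.tsum_comm]
    _ ≤ K1 p' q' a * (∑' n : ℤ, (if U n then kap p' q' a b u n else 0)) +
        ∑' k : ℤ, (K2 p' q' + K3 p' q') * (if U k then kap p' q' a b u k else 0) := by
        gcongr with k
        exact step2 k
    _ = _ := by rw [ENNReal.tsum_mul_left]; ring

end Kol

open MeasureTheory Metric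
open scoped RealInnerProductSpace ENNReal

namespace Kol

lemma meas_FTslice {u : ℝ → ℝ → ℂ} (hc : Continuous (fun w : ℝ × ℝ => u w.1 w.2)) :
    Measurable (fun w : ℝ × ℝ => FT (fun x => u x w.2) w.1) := by
  unfold FT
  have : StronglyMeasurable (fun w : (ℝ × ℝ) × ℝ => ek (w.2 * w.1.1) * u w.2 w.1.2) := by
    apply Measurable.stronglyMeasurable
    apply Continuous.measurable
    refine (continuous_ek.comp (by fun_prop)).mul ?_
    exact hc.comp (by fun_prop : Continuous fun w : (ℝ × ℝ) × ℝ => (w.2, w.1.2))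
  exact (this.integral_prod_right (ν := volume)).measurable

lemma meas_FTy {u : ℝ → ℝ → ℂ} (hc : Continuous (fun w : ℝ × ℝ => u w.1 w.2)) (ξ : ℝ) :
    Measurable (fun y => FT (fun x => u x y) ξ) := by
  have h : Measurable (fun y : ℝ => (ξ, y)) := by fun_prop
  have h2 := (meas_FTslice hc).comp h
  simpa only [Function.comp_def] using h2

lemma integrable_FTslice {u : ℝ → ℝ → ℂ} (hc : Continuous (fun w : ℝ × ℝ => u w.1 w.2))
    (hi : Integrable (fun w : ℝ × ℝ => u w.1 w.2) (volume.prod volume)) (ξ : ℝ) :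
    Integrable (fun y => FT (fun x => u x y) ξ) := by
  have hm : Measurable (fun y => FT (fun x => u x y) ξ) := meas_FTy hc ξ
  refine ⟨hm.aestronglyMeasurable, ?_⟩
  have h1 : ∫⁻ y, ‖FT (fun x => u x y) ξ‖ₑ ≤ ∫⁻ y, ∫⁻ x, ‖u x y‖ₑ :=
    lintegral_mono fun y => enorm_FT_le _ _
  refine lt_of_le_of_lt h1 ?_
  have h2 := hi.2
  unfold HasFiniteIntegral at h2
  rw [lintegral_prod_symm] at h2
  · exact h2
  · exact hc.measurable.enorm.aemeasurable

/-- single-scale estimate -/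
lemma one_scale {p' q' : ℕ} {a b : ℝ} (ha : 2 ≤ a) (hb : 2 ≤ b) {u : ℝ → ℝ → ℂ} (D : Dat p' q' u)
    (n : ℤ) (U : Set ℝ)
    (hU : U = {y | lam (phi (p' + 1) u) (sg (b ^ 2) n) < phi (p' + 1) u y}) :
    ENNReal.ofReal ((b ^ 2) ^ n / ((a ^ 2) ^ n) ^ p') *
      ∫⁻ ξ in Shell (a ^ 2) n, ∫⁻ η in Set.Icc (-(1 / (b ^ 2) ^ n)) (1 / (b ^ 2) ^ n),
        ‖FT (fun y => FT (fun x => u x y) ξ) η‖ₑ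
    ≤ ENNReal.ofReal (16 * (2 * a ^ 2) ^ (p' + 1)) *
        (sg b n * Bn (phi (p' + 1) u) (lam (phi (p' + 1) u) (sg b n ^ 2))) +
      2 * (ENNReal.ofReal (1 / ((a ^ 2) ^ n) ^ p') *
        ∫⁻ ξ in Shell (a ^ 2) n, ∫⁻ y in U, ‖FT (fun x => u x y) ξ‖ₑ) := by
  rw [← sg_sq hb]
  set φ := phi (p' + 1) u with hφ
  set l := lam φ (sg (b ^ 2) n) with hl
  set h := (a ^ 2) ^ n with hh
  set s := (b ^ 2) ^ n with hs
  have hpos : 0 < h := by positivity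
  have spos : 0 < s := by positivity
  have hUm : MeasurableSet U := by
    rw [hU]; exact measurableSet_lt measurable_const D.mφ
  have hgood : ∀ᵐ y, Integrable (fun x => u x y) := D.int.prod_left_ae
  have hgm := meas_FTslice D.cont
  have hpt : ∀ ξ ∈ Shell (a ^ 2) n, ∫⁻ η in Set.Icc (-(1 / s)) (1 / s),
        ‖FT (fun y => FT (fun x => u x y) ξ) η‖ₑ ≤
      ENNReal.ofReal (8 * (1 / b ^ n)) * (ENNReal.ofReal ((2 * (a ^ 2 * h)) ^ (p' + 1)) * Bn φ l) +
        ENNReal.ofReal (2 / s) * ∫⁻ y in U, ‖FT (fun x => u x y) ξ‖ₑ := by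
    intro ξ hξ
    set g : ℝ → ℂ := fun y => FT (fun x => u x y) ξ with hg
    have hgi : Integrable g := integrable_FTslice D.cont D.int ξ
    have hgmy : Measurable g := meas_FTy D.cont ξ
    set g1 := Uᶜ.indicator g with hg1
    have hg1i : Integrable g1 := hgi.indicator hUm.compl
    have hg1m : Measurable g1 := hgmy.indicator hUm.compl
    have hsplit : ∀ η, ‖FT g η‖ₑ ≤ ‖FT g1 η‖ₑ + ∫⁻ y in U, ‖g y‖ₑ := by
      intro η
      have e : FT g η = FT g1 η + FT (U.indicator g) η := by
        have h1 := FT_sub hgi (hgi.indicator hUm) η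
        have h2 : (fun x => g x - U.indicator g x) = g1 := by
          ext x; by_cases hx : x ∈ U <;> simp [hg1, hx]
        rw [h2] at h1; rw [h1]; ring
      rw [e]
      refine (enorm_add_le _ _).trans (add_le_add le_rfl ((enorm_FT_le _ _).trans (le_of_eq ?_)))
      rw [← lintegral_indicator hUm]
      congr 1; ext y
      by_cases hy : y ∈ U <;> simp [hy]
    have h1 : (a ^ 2) ^ (n + 1) = a ^ 2 * h := by rw [zpow_add_one₀ (by positivity), mul_comm]
    have h2 := hξ.1
    rw [h1] at h2
    have h3 : 0 < |ξ| := lt_trans (by positivity) h2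
    have hb1 : ∀ᵐ y, ‖g1 y‖ₑ ≤ ENNReal.ofReal ((2 * (a ^ 2 * h)) ^ (p' + 1)) * min (φ y) l := by
      filter_upwards [hgood] with y hy
      by_cases hyU : y ∈ U
      · simp [hg1, hyU]
      · have hyl : φ y ≤ l := by
          rw [hU] at hyU
          by_contra hcc; exact hyU (not_le.mp hcc)
        rw [hg1, Set.indicator_of_mem (by exact hyU), min_eq_left hyl]
        refine (FT_decay (p' + 1) (D.cx y) hy (abs_pos.mp h3)).trans ?_
        rw [hφ, phi]
        gcongr
        rw [div_le_iff₀ h3]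
        rw [div_lt_iff₀ (by positivity)] at h2
        nlinarith
    have hL2 : (∫⁻ y, ‖g1 y‖ₑ ^ 2) ^ (1 / 2 : ℝ) ≤
        ENNReal.ofReal ((2 * (a ^ 2 * h)) ^ (p' + 1)) * Bn φ l := by
      calc _ ≤ (∫⁻ y, (ENNReal.ofReal ((2 * (a ^ 2 * h)) ^ (p' + 1)) * min (φ y) l) ^ 2) ^ (1 / 2 : ℝ) := by
            gcongr ?_ ^ _
            refine lintegral_mono_ae ?_
            filter_upwards [hb1] with y hy
            gcongr
        _ = _ := by
            simp_rw [mul_pow _ (min _ _)]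
            rw [lintegral_const_mul _ ((D.mφ.min measurable_const).pow_const 2),
              ENNReal.mul_rpow_of_nonneg _ _ (by norm_num), rpow_half_sq]
            rfl
    calc _ ≤ ∫⁻ η in Set.Icc (-(1 / s)) (1 / s), (‖FT g1 η‖ₑ + ∫⁻ y in U, ‖g y‖ₑ) :=
          lintegral_mono fun η => hsplit η
      _ = (∫⁻ η in Set.Icc (-(1 / s)) (1 / s), ‖FT g1 η‖ₑ) +
          (∫⁻ y in U, ‖g y‖ₑ) * volume (Set.Icc (-(1 / s)) (1 / s)) := by
          rw [lintegral_add_left (measurable_FT hg1m).enorm, setLIntegral_const]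
      _ ≤ _ := by
          refine add_le_add ?_ ?_
          · refine (bessel hg1m hg1i (1 / s) (by positivity)).trans ?_
            rw [Real.sqrt_div zero_le_one, Real.sqrt_one, hs, sq_zpow_sqrt hb]
            gcongr
          · rw [Real.volume_Icc, mul_comm]
            refine le_of_eq ?_
            congr 2; ring
  have hmU : Measurable fun ξ => ∫⁻ y in U, ‖FT (fun x => u x y) ξ‖ₑ :=
    (hgm.enorm).lintegral_prod_right' (ν := volume.restrict U)
  calc _ ≤ ENNReal.ofReal (s / h ^ p') * ∫⁻ ξ in Shell (a ^ 2) n,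
        (ENNReal.ofReal (8 * (1 / b ^ n)) * (ENNReal.ofReal ((2 * (a ^ 2 * h)) ^ (p' + 1)) * Bn φ l) +
        ENNReal.ofReal (2 / s) * ∫⁻ y in U, ‖FT (fun x => u x y) ξ‖ₑ) := by
        exact mul_le_mul' le_rfl (setLIntegral_mono' (measurableSet_Shell _ _) hpt)
    _ ≤ ENNReal.ofReal (s / h ^ p') * (ENNReal.ofReal (8 * (1 / b ^ n)) *
          (ENNReal.ofReal ((2 * (a ^ 2 * h)) ^ (p' + 1)) * Bn φ l) * ENNReal.ofReal (2 / h) +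
        ENNReal.ofReal (2 / s) *
          ∫⁻ ξ in Shell (a ^ 2) n, ∫⁻ y in U, ‖FT (fun x => u x y) ξ‖ₑ) := by
        rw [lintegral_add_left measurable_const, setLIntegral_const, lintegral_const_mul _ hmU]
        gcongr
        exact volume_Shell_le _ _
    _ = (ENNReal.ofReal (s / h ^ p') * ENNReal.ofReal (8 * (1 / b ^ n)) *
          ENNReal.ofReal ((2 * (a ^ 2 * h)) ^ (p' + 1)) * ENNReal.ofReal (2 / h)) * Bn φ l +
        (ENNReal.ofReal (s / h ^ p') * ENNReal.ofReal (2 / s)) *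
          ∫⁻ ξ in Shell (a ^ 2) n, ∫⁻ y in U, ‖FT (fun x => u x y) ξ‖ₑ := by ring
    _ = _ := by
        rw [← mul_assoc (ENNReal.ofReal (16 * _)), ← mul_assoc (2:ℝ≥0∞), sg, show (2:ℝ≥0∞) = ENNReal.ofReal 2 by simp]
        repeat rw [← ENNReal.ofReal_mul (by positivity)]
        have hb' : s = b ^ n * b ^ n := by rw [hs, ← sq_zpow_sqrt hb, Real.mul_self_sqrt (by positivity)]
        have hbn : 0 < b ^ n := by positivity
        congr 3
        · rw [show 2 * (a ^ 2 * h) = (2 * a ^ 2) * h by ring, mul_pow _ h, pow_succ h, hb']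
          field_simp
          norm_num
        · field_simp

lemma sum_kap {p' q' : ℕ} {a b : ℝ} (ha : 2 ≤ a) (hb : 2 ≤ b) {u : ℝ → ℝ → ℂ} (D : Dat p' q' u)
    (hψ : ∫⁻ x, psi (q' + 1) u x ≠ ⊤) :
    ∑' n : ℤ, sg (b ^ 2) n * kap p' q' a b u n ≤
      ENNReal.ofReal (2 * b ^ 2) * (∫⁻ y, phi (p' + 1) u y) +
        ENNReal.ofReal (4 * a) * ∫⁻ x, psi (q' + 1) u x := by
  have hb2 : 2 ≤ b ^ 2 := by nlinarith
  have e : ∀ n : ℤ, sg (b ^ 2) n * kap p' q' a b u n =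
      ENNReal.ofReal (b ^ 2) * (sg (b ^ 2) (n - 1) * lam (phi (p' + 1) u) (sg (b ^ 2) (n - 1))) +
      sg a n * Bn (psi (q' + 1) u) (lam (psi (q' + 1) u) (sg a n ^ 2)) := by
    intro n
    rw [kap, mul_add, ← mul_assoc, ← mul_assoc, ← sg_succ hb2, sub_add_cancel, ← sg_sq ha]
    congr 2
    have : 0 < (b ^ 2) ^ n := by positivity
    rw [sg, sg, ← ENNReal.ofReal_mul (by positivity)]
    congr 1; field_simp
  simp_rw [e]
  rw [ENNReal.tsum_add, ENNReal.tsum_mul_left]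
  refine add_le_add ?_ (sum_Bn ha D.mψ hψ)
  have h1 := (Equiv.subRight (1:ℤ)).tsum_eq
    (fun n => sg (b ^ 2) n * lam (phi (p' + 1) u) (sg (b ^ 2) n))
  simp only [Equiv.subRight_apply] at h1
  rw [h1, mul_comm (2:ℝ), ENNReal.ofReal_mul (by positivity), mul_assoc]
  gcongr
  simpa using sum_lam hb2 D.mφ

lemma low_part {p' q' : ℕ} {a b : ℝ} (ha : 2 ≤ a) (hb : 2 ≤ b) (hab : a ^ (p' + 1) = b ^ (q' + 1))
    {u : ℝ → ℝ → ℂ} (D : Dat p' q' u) (hψ : ∫⁻ x, psi (q' + 1) u x ≠ ⊤) :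
    ∑' n : ℤ, ENNReal.ofReal (1 / ((a ^ 2) ^ n) ^ p') *
        ∫⁻ ξ in Shell (a ^ 2) n,
          ∫⁻ y in {y | lam (phi (p' + 1) u) (sg (b ^ 2) n) < phi (p' + 1) u y},
            ‖FT (fun x => u x y) ξ‖ₑ
      ≤ (K1 p' q' a + K2 p' q' + K3 p' q') *
        (ENNReal.ofReal (2 * b ^ 2) * (∫⁻ y, phi (p' + 1) u y) +
        ENNReal.ofReal (4 * a) * ∫⁻ x, psi (q' + 1) u x) := by
  classical
  have hb2 : 2 ≤ b ^ 2 := by nlinarith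
  set φ := phi (p' + 1) u with hφ
  set U : ℤ → Set ℝ := fun n => {y | lam φ (sg (b ^ 2) n) < φ y} with hU
  have hUm : ∀ n, MeasurableSet (U n) := fun n => measurableSet_lt measurable_const D.mφ
  have hgm := meas_FTslice D.cont
  have hUv : ∀ n, volume (U n) ≤ sg (b ^ 2) n := fun n => meas_lam_lt _ _
  have hgood : ∀ᵐ y, Integrable (fun x => u x y) := D.int.prod_left_ae
  have hinter : ∀ᵐ y, ∃ k, y ∉ U k := by
    have h0 : volume (⋂ n, U n) = 0 := by
      have h1 : Filter.Tendsto (fun j : ℕ => sg (b ^ 2) (-(j:ℤ))) Filter.atTop (nhds 0) := by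
        unfold sg
        rw [← ENNReal.ofReal_zero]
        apply ENNReal.tendsto_ofReal
        simp_rw [zpow_neg, zpow_natCast, ← inv_pow]
        exact tendsto_pow_atTop_nhds_zero_of_lt_one (by positivity)
          (by rw [inv_pow]; exact inv_lt_one_of_one_lt₀ (lt_of_lt_of_le one_lt_two hb2))
      refine le_antisymm (ge_of_tendsto' h1 fun j => ?_) zero_le
      exact (measure_mono (Set.iInter_subset _ _)).trans (hUv _)
    filter_upwards [measure_eq_zero_iff_ae_notMem.mp h0] with y hy
    simpa using hy
  have hmS : ∀ n, Measurable fun y => ∫⁻ ξ in Shell (a ^ 2) n, ‖FT (fun x => u x y) ξ‖ₑ := by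
    intro n
    have : Measurable (fun w : ℝ × ℝ => ‖FT (fun x => u x w.1) w.2‖ₑ) := (hgm.comp measurable_swap).enorm
    exact this.lintegral_prod_right' (ν := volume.restrict (Shell (a ^ 2) n))
  have e1 : ∀ n, ENNReal.ofReal (1 / ((a ^ 2) ^ n) ^ p') *
        ∫⁻ ξ in Shell (a ^ 2) n, ∫⁻ y in U n, ‖FT (fun x => u x y) ξ‖ₑ
      = ∫⁻ y, (if y ∈ U n then ENNReal.ofReal (1 / ((a ^ 2) ^ n) ^ p') *
        ∫⁻ ξ in Shell (a ^ 2) n, ‖FT (fun x => u x y) ξ‖ₑ else 0) := by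
    intro n
    rw [lintegral_lintegral_swap hgm.enorm.aemeasurable, ← lintegral_const_mul _ (hmS n),
      ← lintegral_indicator (hUm n)]
    congr 1
    ext y
    rw [Set.indicator_apply]
  have hterm : ∀ n, Measurable fun y => (if y ∈ U n then ENNReal.ofReal (1 / ((a ^ 2) ^ n) ^ p') *
        ∫⁻ ξ in Shell (a ^ 2) n, ‖FT (fun x => u x y) ξ‖ₑ else 0) := fun n =>
    Measurable.ite (hUm n) ((hmS n).const_mul _) measurable_const
  have hterm2 : ∀ n, Measurable fun y => (if y ∈ U n then kap p' q' a b u n else 0) := fun n =>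
    Measurable.ite (hUm n) measurable_const measurable_const
  calc _ = ∫⁻ y, ∑' n : ℤ, (if y ∈ U n then ENNReal.ofReal (1 / ((a ^ 2) ^ n) ^ p') *
        ∫⁻ ξ in Shell (a ^ 2) n, ‖FT (fun x => u x y) ξ‖ₑ else 0) := by
        rw [lintegral_tsum fun n => (hterm n).aemeasurable]
        exact tsum_congr e1
    _ ≤ ∫⁻ y, (K1 p' q' a + K2 p' q' + K3 p' q') *
          ∑' n : ℤ, (if y ∈ U n then kap p' q' a b u n else 0) := by
        refine lintegral_mono_ae ?_
        filter_upwards [hgood, hinter] with y hy hk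
        obtain ⟨k, hk⟩ := hk
        exact pointwise ha hb hab D hy (fun n => y ∈ U n) (fun n => Iff.rfl) hk
    _ = (K1 p' q' a + K2 p' q' + K3 p' q') * ∑' n : ℤ, kap p' q' a b u n * volume (U n) := by
        rw [lintegral_const_mul _ (Measurable.tsum hterm2),
          lintegral_tsum fun n => (hterm2 n).aemeasurable]
        congr 1
        refine tsum_congr fun n => ?_
        rw [← lintegral_indicator_const (hUm n)]
        congr 1
        ext y
        rw [Set.indicator_apply]
    _ ≤ _ := by
        gcongr
        refine le_trans (ENNReal.tsum_le_tsum fun n => ?_) (sum_kap ha hb D hψ)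
        rw [mul_comm]
        gcongr
        exact hUv n

/-- final constant -/
noncomputable def KK (p' q' : ℕ) (a b : ℝ) : ℝ≥0∞ :=
  ENNReal.ofReal (16 * (2 * a ^ 2) ^ (p' + 1)) * ENNReal.ofReal (4 * b) +
    2 * ((K1 p' q' a + K2 p' q' + K3 p' q') * (ENNReal.ofReal (2 * b ^ 2) + ENNReal.ofReal (4 * a))) + 1

lemma KK_ne_top (p' q' : ℕ) (a b : ℝ) : KK p' q' a b ≠ ⊤ := by
  unfold KK K1 K2 K3
  finiteness

lemma two_dim {p' q' : ℕ} {a b : ℝ} (ha : 2 ≤ a) (hb : 2 ≤ b) (hab : a ^ (p' + 1) = b ^ (q' + 1))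
    {u : ℝ → ℝ → ℂ} (D : Dat p' q' u) :
    ∑' n : ℤ, ENNReal.ofReal ((b ^ 2) ^ n / ((a ^ 2) ^ n) ^ p') *
      ∫⁻ ξ in Shell (a ^ 2) n, ∫⁻ η in Set.Icc (-(1 / (b ^ 2) ^ n)) (1 / (b ^ 2) ^ n),
        ‖FT (fun y => FT (fun x => u x y) ξ) η‖ₑ
    ≤ KK p' q' a b * ((∫⁻ y, phi (p' + 1) u y) + ∫⁻ x, psi (q' + 1) u x) := by
  by_cases htop : (∫⁻ y, phi (p' + 1) u y) + ∫⁻ x, psi (q' + 1) u x = ⊤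
  · rw [htop, ENNReal.mul_top (by simp [KK])]; exact le_top
  have hφ : ∫⁻ y, phi (p' + 1) u y ≠ ⊤ := fun h => htop (by simp [h])
  have hψ : ∫⁻ x, psi (q' + 1) u x ≠ ⊤ := fun h => htop (by simp [h])
  refine (ENNReal.tsum_le_tsum fun n => one_scale ha hb D n _ rfl).trans ?_
  rw [ENNReal.tsum_add, ENNReal.tsum_mul_left, ENNReal.tsum_mul_left]
  have h1 := sum_Bn hb D.mφ hφ
  have h2 := low_part ha hb hab D hψ
  set P := ∫⁻ y, phi (p' + 1) u y
  set Q := ∫⁻ x, psi (q' + 1) u x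
  calc _ ≤ ENNReal.ofReal (16 * (2 * a ^ 2) ^ (p' + 1)) * (ENNReal.ofReal (4 * b) * (P + Q)) +
      2 * ((K1 p' q' a + K2 p' q' + K3 p' q') *
        (ENNReal.ofReal (2 * b ^ 2) * (P + Q) + ENNReal.ofReal (4 * a) * (P + Q))) := by
        gcongr
        · refine h1.trans ?_
          gcongr
          exact le_self_add
        · refine h2.trans ?_
          gcongr
          · exact le_self_add
          · exact le_add_self
    _ ≤ _ := by
        rw [KK, add_mul _ 1]
        refine le_trans (le_of_eq ?_) le_self_add
        ring

end Kol

open MeasureTheory Metric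
open scoped RealInnerProductSpace ENNReal

namespace Kol

/-- coordinates -/
noncomputable def Tm {d m : ℕ} (e : Fin (m + 2) ≃ Fin d) :
    ((ℝ × ℝ) × (Fin m → ℝ)) ≃ᵐ EuclideanSpace ℝ (Fin d) :=
  MeasurableEquiv.prodAssoc.trans <|
  (MeasurableEquiv.prodCongr (MeasurableEquiv.refl ℝ)
    (MeasurableEquiv.piFinSuccAbove (fun _ : Fin (m + 1) => ℝ) 0).symm).trans <|
  (MeasurableEquiv.piFinSuccAbove (fun _ : Fin (m + 2) => ℝ) 0).symm.trans <|
  (MeasurableEquiv.piCongrLeft (fun _ : Fin d => ℝ) e).trans <|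
  MeasurableEquiv.toLp 2 (Fin d → ℝ)

lemma Tm_apply {d m : ℕ} (e : Fin (m + 2) ≃ Fin d) (w : (ℝ × ℝ) × (Fin m → ℝ)) (k : Fin (m + 2)) :
    Tm e w (e k) = Fin.cons (α := fun _ => ℝ) w.1.1 (Fin.cons (α := fun _ => ℝ) w.1.2 w.2) k := by
  have h := Equiv.piCongrLeft_apply_apply (P := fun _ : Fin d => ℝ) e
    (Fin.cons (α := fun _ => ℝ) w.1.1 (Fin.cons (α := fun _ => ℝ) w.1.2 w.2)) k
  rw [← h]
  simp only [← Fin.insertNth_zero']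
  rfl

lemma Tm_mp {d m : ℕ} (e : Fin (m + 2) ≃ Fin d) :
    MeasurePreserving (Tm e) ((volume.prod volume).prod volume) volume := by
  have h1 : MeasurePreserving (MeasurableEquiv.prodAssoc (α := ℝ) (β := ℝ) (γ := Fin m → ℝ)) :=
    volume_preserving_prodAssoc
  have h2 := (volume_preserving_piFinSuccAbove (fun _ : Fin (m + 1) => ℝ) 0).symm
  have h3 := (volume_preserving_piFinSuccAbove (fun _ : Fin (m + 2) => ℝ) 0).symm
  have h4 := volume_measurePreserving_piCongrLeft (fun _ : Fin d => ℝ) e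
  have h5 := PiLp.volume_preserving_toLp (Fin d)
  have h6 := (MeasurePreserving.id (volume : Measure ℝ)).prod h2
  exact h5.comp (h4.comp (h3.comp (h6.comp h1)))

lemma Tm_cont {d m : ℕ} (e : Fin (m + 2) ≃ Fin d) : Continuous (Tm e) := by
  have h : Continuous (fun w => (WithLp.toLp 2 (fun k => Tm e w k) : EuclideanSpace ℝ (Fin d))) := by
    refine (PiLp.continuous_toLp 2 _).comp (continuous_pi fun k => ?_)
    obtain ⟨k, rfl⟩ := e.surjective k
    simp_rw [Tm_apply]
    refine Fin.cases ?_ (fun k => ?_) k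
    · simp only [Fin.cons_zero]; fun_prop
    · refine Fin.cases ?_ (fun k => ?_) k
      · simp only [Fin.cons_succ, Fin.cons_zero]; fun_prop
      · simp only [Fin.cons_succ]; fun_prop
  exact h

lemma Tm_inner {d m : ℕ} (e : Fin (m + 2) ≃ Fin d) (w w' : (ℝ × ℝ) × (Fin m → ℝ)) :
    ⟪Tm e w, Tm e w'⟫ = w.1.1 * w'.1.1 + w.1.2 * w'.1.2 + ∑ k, w.2 k * w'.2 k := by
  rw [PiLp.inner_apply, ← e.sum_comp]
  simp_rw [Tm_apply]
  rw [Fin.sum_univ_succ, Fin.sum_univ_succ]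
  simp [mul_comm, add_assoc]

lemma Tm_line0 {d m : ℕ} (e : Fin (m + 2) ≃ Fin d) (x y : ℝ) (z : Fin m → ℝ) :
    Tm e ((x, y), z) = Tm e ((0, y), z) + x • EuclideanSpace.single (e 0) (1:ℝ) := by
  ext k
  obtain ⟨k, rfl⟩ := e.surjective k
  simp only [PiLp.add_apply, PiLp.smul_apply, EuclideanSpace.single_apply, Tm_apply,
    e.injective.eq_iff]
  refine Fin.cases ?_ (fun k => ?_) k
  · simp
  · simp

lemma Tm_line1 {d m : ℕ} (e : Fin (m + 2) ≃ Fin d) (x y : ℝ) (z : Fin m → ℝ) :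
    Tm e ((x, y), z) = Tm e ((x, 0), z) + y • EuclideanSpace.single (e 1) (1:ℝ) := by
  ext k
  obtain ⟨k, rfl⟩ := e.surjective k
  simp only [PiLp.add_apply, PiLp.smul_apply, EuclideanSpace.single_apply, Tm_apply,
    e.injective.eq_iff]
  refine Fin.cases ?_ (fun k => ?_) k
  · simp
  · refine Fin.cases ?_ (fun k => ?_) k
    · simp
    · have h : ¬ (k.succ.succ = 1) := by simp [Fin.ext_iff]
      simp [h]

lemma exists_equiv (m : ℕ) (i j : Fin (m + 2)) (hij : i ≠ j) :
    ∃ e : Fin (m + 2) ≃ Fin (m + 2), e 0 = i ∧ e 1 = j := by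
  have h0 : Equiv.swap 0 i j ≠ 0 := by
    intro h
    have : j = Equiv.swap 0 i 0 := by
      have h' := congrArg (Equiv.swap 0 i) h
      rwa [Equiv.swap_apply_self] at h'
    rw [Equiv.swap_apply_left] at this
    exact hij this.symm
  refine ⟨(Equiv.swap 1 (Equiv.swap 0 i j)).trans (Equiv.swap 0 i), ?_, ?_⟩
  · rw [Equiv.trans_apply, Equiv.swap_apply_of_ne_of_ne (by simp) (Ne.symm h0), Equiv.swap_apply_left]
  · rw [Equiv.trans_apply, Equiv.swap_apply_left, Equiv.swap_apply_self]

/-- line derivatives -/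
lemma line_deriv {E : Type*} [NormedAddCommGroup E] [NormedSpace ℝ E] {f : E → ℂ} {n : ℕ}
    (hf : ContDiff ℝ n f) (c v : E) (t : ℝ) :
    iteratedDeriv n (fun t : ℝ => f (c + t • v)) t = iteratedFDeriv ℝ n f (c + t • v) (fun _ => v) := by
  set L : ℝ →L[ℝ] E := (ContinuousLinearMap.id ℝ ℝ).smulRight v with hL
  have hg : ContDiff ℝ n (fun x => f (c + x)) := hf.comp (by fun_prop)
  have e : (fun t : ℝ => f (c + t • v)) = (fun x => f (c + x)) ∘ L := by ext t; simp [hL]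
  rw [iteratedDeriv_eq_iteratedFDeriv, e, L.iteratedFDeriv_comp_right hg t (i := n) (le_refl _),
    ContinuousMultilinearMap.compContinuousLinearMap_apply, iteratedFDeriv_comp_add_left]
  simp [hL]

end Kol

open MeasureTheory Metric
open scoped RealInnerProductSpace ENNReal

namespace Kol

/-- iterated partial Fourier transform -/
noncomputable def GG {m : ℕ} (F : (ℝ × ℝ) × (Fin m → ℝ) → ℂ) (w : (ℝ × ℝ) × (Fin m → ℝ)) : ℂ :=
  FT (fun y => FT (fun x => F ((x, y), w.2)) w.1.1) w.1.2

lemma meas_GG {m : ℕ} {F : (ℝ × ℝ) × (Fin m → ℝ) → ℂ} (hc : Continuous F) : Measurable (GG F) := by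
  unfold GG FT
  have h1 : StronglyMeasurable (fun w : ((ℝ × (Fin m → ℝ)) × ℝ) × ℝ =>
      ek (w.2 * w.1.1.1) * F ((w.2, w.1.2), w.1.1.2)) := by
    apply Measurable.stronglyMeasurable
    apply Continuous.measurable
    refine (continuous_ek.comp (by fun_prop)).mul ?_
    exact hc.comp (by fun_prop)
  have h2 : Measurable (fun w : (ℝ × (Fin m → ℝ)) × ℝ =>
      ∫ x, ek (x * w.1.1) * F ((x, w.2), w.1.2)) :=
    (h1.integral_prod_right' (ν := volume)).measurable
  have h3 : StronglyMeasurable (fun w : ((ℝ × ℝ) × (Fin m → ℝ)) × ℝ =>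
      ek (w.2 * w.1.1.2) * ∫ x, ek (x * w.1.1.1) * F ((x, w.2), w.1.2)) := by
    apply Measurable.stronglyMeasurable
    refine Measurable.mul (continuous_ek.comp (by fun_prop)).measurable ?_
    have h4 : Measurable
      fun w : ((ℝ × ℝ) × (Fin m → ℝ)) × ℝ => ((w.1.1.1, w.1.2), w.2) := by fun_prop
    have h5 := h2.comp h4
    simpa only [Function.comp_def] using h5
  exact (h3.integral_prod_right' (ν := volume)).measurable

/-- full transform in coordinates -/
noncomputable def FH {m : ℕ} (F : (ℝ × ℝ) × (Fin m → ℝ) → ℂ) (w' : (ℝ × ℝ) × (Fin m → ℝ)) : ℂ :=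
  ∫ w : (ℝ × ℝ) × (Fin m → ℝ), ek (w.1.1 * w'.1.1 + w.1.2 * w'.1.2 + ∑ k, w.2 k * w'.2 k) * F w
    ∂((volume.prod volume).prod volume)

lemma FH_le {m : ℕ} {F : (ℝ × ℝ) × (Fin m → ℝ) → ℂ}
    (hi : Integrable F ((volume.prod volume).prod volume)) (w' : (ℝ × ℝ) × (Fin m → ℝ)) :
    ‖FH F w'‖ₑ ≤ ∫⁻ z, ‖GG F (w'.1, z)‖ₑ := by
  have hg : Integrable (fun w : (ℝ × ℝ) × (Fin m → ℝ) =>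
      ek (w.1.1 * w'.1.1 + w.1.2 * w'.1.2 + ∑ k, w.2 k * w'.2 k) * F w)
      ((volume.prod volume).prod volume) := by
    refine hi.bdd_mul (c := 1) ?_ ?_
    · exact (continuous_ek.comp (by fun_prop)).aestronglyMeasurable
    · exact Filter.Eventually.of_forall fun w => (norm_ek _).le
  unfold FH
  rw [integral_prod_symm _ hg]
  refine (enorm_integral_le_lintegral_enorm _).trans (lintegral_mono_ae ?_)
  filter_upwards [hg.prod_left_ae] with z hz
  rw [integral_prod_symm _ hz]
  unfold GG FT
  have : ∀ x y, ek (x * w'.1.1 + y * w'.1.2 + ∑ k, z k * w'.2 k) * F ((x, y), z) =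
      ek (∑ k, z k * w'.2 k) * (ek (y * w'.1.2) * (ek (x * w'.1.1) * F ((x, y), z))) := by
    intro x y; rw [ek_add, ek_add]; ring
  simp_rw [this, integral_const_mul]
  rw [enorm_mul, enorm_ek, one_mul]

lemma box_le {m : ℕ} {F : (ℝ × ℝ) × (Fin m → ℝ) → ℂ} (hc : Continuous F)
    (hi : Integrable F ((volume.prod volume).prod volume)) (A B : Set ℝ) (Q : Set (Fin m → ℝ)) :
    ∫⁻ w in (A ×ˢ B) ×ˢ Q, ‖FH F w‖ₑ ∂((volume.prod volume).prod volume) ≤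
      volume Q * ∫⁻ z, ∫⁻ ξ in A, ∫⁻ η in B, ‖GG F ((ξ, η), z)‖ₑ := by
  have hm := (meas_GG hc).enorm
  have hm1 : Measurable (fun w : ℝ × ℝ => ∫⁻ z, ‖GG F (w, z)‖ₑ) :=
    hm.lintegral_prod_right'
  calc _ ≤ ∫⁻ w in (A ×ˢ B) ×ˢ Q, (∫⁻ z, ‖GG F (w.1, z)‖ₑ) ∂((volume.prod volume).prod volume) :=
        lintegral_mono fun w => FH_le hi w
    _ = volume Q * ∫⁻ w in A ×ˢ B, (∫⁻ z, ‖GG F (w, z)‖ₑ) ∂(volume.prod volume) := by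
        have hm2 : Measurable (fun w : (ℝ × ℝ) × (Fin m → ℝ) => ∫⁻ z, ‖GG F (w.1, z)‖ₑ) :=
          hm1.comp measurable_fst
        rw [← Measure.prod_restrict, lintegral_prod _ hm2.aemeasurable]
        simp only [lintegral_const, Measure.restrict_apply_univ]
        rw [lintegral_mul_const _ hm1, mul_comm]
    _ = _ := by
        rw [lintegral_lintegral_swap (f := fun w z => ‖GG F (w, z)‖ₑ) hm.aemeasurable]
        congr 2; ext z
        have hm3 : Measurable (fun w : ℝ × ℝ => ‖GG F (w, z)‖ₑ) :=
          hm.comp (by fun_prop : Measurable fun w : ℝ × ℝ => (w, z))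
        rw [← Measure.prod_restrict, lintegral_prod _ hm3.aemeasurable]

end Kol

open MeasureTheory Metric
open scoped RealInnerProductSpace ENNReal

namespace Kol

/-- pure partial derivative -/
noncomputable def PD {d : ℕ} (p : ℕ) (k : Fin d) (f : EuclideanSpace ℝ (Fin d) → ℂ)
    (x : EuclideanSpace ℝ (Fin d)) : ℂ :=
  iteratedFDeriv ℝ p f x (fun _ => EuclideanSpace.single k (1 : ℝ))

lemma PD_cont {d : ℕ} {p : ℕ} (k : Fin d) {f : EuclideanSpace ℝ (Fin d) → ℂ}
    (hf : ContDiff ℝ p f) : Continuous (PD p k f) := by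
  unfold PD
  have h := hf.continuous_iteratedFDeriv (m := p) le_rfl
  exact (ContinuousMultilinearMap.apply ℝ (fun _ : Fin p => EuclideanSpace ℝ (Fin d)) ℂ
    (fun _ => EuclideanSpace.single k (1 : ℝ))).continuous.comp h

lemma phi_eq {d m : ℕ} (e : Fin (m + 2) ≃ Fin d) {p : ℕ} {f : EuclideanSpace ℝ (Fin d) → ℂ}
    (hf : ContDiff ℝ p f) (z : Fin m → ℝ) (y : ℝ) :
    phi p (fun x y => f (Tm e ((x, y), z))) y = ∫⁻ x, ‖PD p (e 0) f (Tm e ((x, y), z))‖ₑ := by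
  unfold phi PD
  congr 1; ext x
  have : (fun x => f (Tm e ((x, y), z))) =
      fun x : ℝ => f (Tm e ((0, y), z) + x • EuclideanSpace.single (e 0) (1:ℝ)) := by
    ext x; rw [← Tm_line0]
  rw [this, line_deriv hf, ← Tm_line0]

lemma psi_eq {d m : ℕ} (e : Fin (m + 2) ≃ Fin d) {q : ℕ} {f : EuclideanSpace ℝ (Fin d) → ℂ}
    (hf : ContDiff ℝ q f) (z : Fin m → ℝ) (x : ℝ) :
    psi q (fun x y => f (Tm e ((x, y), z))) x = ∫⁻ y, ‖PD q (e 1) f (Tm e ((x, y), z))‖ₑ := by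
  unfold psi PD
  congr 1; ext y
  have : (fun y => f (Tm e ((x, y), z))) =
      fun y : ℝ => f (Tm e ((x, 0), z) + y • EuclideanSpace.single (e 1) (1:ℝ)) := by
    ext y; rw [← Tm_line1]
  beta_reduce
  rw [this, line_deriv hf, ← Tm_line1]

lemma mk_dat {d m : ℕ} (e : Fin (m + 2) ≃ Fin d) {p' q' : ℕ} {f : EuclideanSpace ℝ (Fin d) → ℂ}
    (hp : ContDiff ℝ (p' + 1 : ℕ) f) (hq : ContDiff ℝ (q' + 1 : ℕ) f) (z : Fin m → ℝ)
    (hi : Integrable (fun w : ℝ × ℝ => f (Tm e (w, z))) (volume.prod volume)) :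
    Dat p' q' (fun x y => f (Tm e ((x, y), z))) where
  cont := hp.continuous.comp ((Tm_cont e).comp (by fun_prop))
  int := hi
  cx y := by
    have : (fun x => f (Tm e ((x, y), z))) =
        fun x : ℝ => f (Tm e ((0, y), z) + x • EuclideanSpace.single (e 0) (1:ℝ)) := by
      ext x; rw [← Tm_line0]
    rw [this]
    exact hp.comp (by fun_prop)
  cy x := by
    have : (fun y => f (Tm e ((x, y), z))) =
        fun y : ℝ => f (Tm e ((x, 0), z) + y • EuclideanSpace.single (e 1) (1:ℝ)) := by
      ext y; rw [← Tm_line1]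
    rw [this]
    exact hq.comp (by fun_prop)
  mφ := by
    have h : Continuous (fun w : ℝ × ℝ => PD (p' + 1) (e 0) f (Tm e ((w.2, w.1), z))) :=
      (PD_cont _ hp).comp ((Tm_cont e).comp (by fun_prop))
    have h2 := h.measurable.enorm.lintegral_prod_right' (ν := volume)
    have h3 : phi (p' + 1) (fun x y => f (Tm e ((x, y), z))) =
      fun y => ∫⁻ x, ‖PD (p' + 1) (e 0) f (Tm e ((x, y), z))‖ₑ := funext fun y => phi_eq e hp z y
    rw [h3]; exact h2
  mψ := by
    have h : Continuous (fun w : ℝ × ℝ => PD (q' + 1) (e 1) f (Tm e ((w.1, w.2), z))) :=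
      (PD_cont _ hq).comp ((Tm_cont e).comp (by fun_prop))
    have h2 := h.measurable.enorm.lintegral_prod_right' (ν := volume)
    have h3 : psi (q' + 1) (fun x y => f (Tm e ((x, y), z))) =
      fun x => ∫⁻ y, ‖PD (q' + 1) (e 1) f (Tm e ((x, y), z))‖ₑ := funext fun y => psi_eq e hq z y
    rw [h3]; exact h2

lemma lint_phi {d m : ℕ} (e : Fin (m + 2) ≃ Fin d) {p : ℕ} {f : EuclideanSpace ℝ (Fin d) → ℂ}
    (hf : ContDiff ℝ p f) :
    ∫⁻ z, ∫⁻ y, phi p (fun x y => f (Tm e ((x, y), z))) y = ∫⁻ x, ‖PD p (e 0) f x‖ₑ := by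
  simp_rw [phi_eq e hf]
  have hc := PD_cont (e 0) hf
  have hc2 : Continuous (fun w => PD p (e 0) f (Tm e w)) := hc.comp (Tm_cont e)
  rw [← (Tm_mp e).lintegral_comp hc.measurable.enorm, lintegral_prod_symm _ hc2.measurable.enorm.aemeasurable]
  congr 1; ext z
  rw [lintegral_prod_symm]
  exact (hc2.comp (by fun_prop : Continuous fun w : ℝ × ℝ => (w, z))).measurable.enorm.aemeasurable

lemma lint_psi {d m : ℕ} (e : Fin (m + 2) ≃ Fin d) {q : ℕ} {f : EuclideanSpace ℝ (Fin d) → ℂ}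
    (hf : ContDiff ℝ q f) :
    ∫⁻ z, ∫⁻ x, psi q (fun x y => f (Tm e ((x, y), z))) x = ∫⁻ x, ‖PD q (e 1) f x‖ₑ := by
  simp_rw [psi_eq e hf]
  have hc := PD_cont (e 1) hf
  have hc2 : Continuous (fun w => PD q (e 1) f (Tm e w)) := hc.comp (Tm_cont e)
  rw [← (Tm_mp e).lintegral_comp hc.measurable.enorm, lintegral_prod_symm _ hc2.measurable.enorm.aemeasurable]
  congr 1; ext z
  rw [lintegral_prod]
  exact (hc2.comp (by fun_prop : Continuous fun w : ℝ × ℝ => (w, z))).measurable.enorm.aemeasurable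

lemma per_e {d m : ℕ} (e : Fin (m + 2) ≃ Fin d) {p' q' : ℕ} {a b : ℝ} (ha : 2 ≤ a) (hb : 2 ≤ b)
    (hab : a ^ (p' + 1) = b ^ (q' + 1)) {f : EuclideanSpace ℝ (Fin d) → ℂ}
    (hp : ContDiff ℝ (p' + 1 : ℕ) f) (hq : ContDiff ℝ (q' + 1 : ℕ) f) (hi : Integrable f)
    (V : ℤ → Set (Fin m → ℝ)) (c : ℝ≥0∞)
    (hV : ∀ n, volume (V n) ≤ c * ENNReal.ofReal ((b ^ 2) ^ n / ((a ^ 2) ^ n) ^ p')) :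
    ∑' n : ℤ, ∫⁻ w in (Shell (a ^ 2) n ×ˢ Set.Icc (-(1 / (b ^ 2) ^ n)) (1 / (b ^ 2) ^ n)) ×ˢ V n,
        ‖FH (fun w => f (Tm e w)) w‖ₑ ∂((volume.prod volume).prod volume) ≤
      c * KK p' q' a b *
        ((∫⁻ x, ‖PD (p' + 1) (e 0) f x‖ₑ) + ∫⁻ x, ‖PD (q' + 1) (e 1) f x‖ₑ) := by
  set F : (ℝ × ℝ) × (Fin m → ℝ) → ℂ := fun w => f (Tm e w) with hF
  have hFc : Continuous F := hp.continuous.comp (Tm_cont e)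
  have hFi : Integrable F ((volume.prod volume).prod volume) :=
    ((Tm_mp e).integrable_comp hi.1).mpr hi
  have hm := (meas_GG hFc).enorm
  have hm1 : ∀ n : ℤ, Measurable (fun z => ∫⁻ ξ in Shell (a ^ 2) n,
      ∫⁻ η in Set.Icc (-(1 / (b ^ 2) ^ n)) (1 / (b ^ 2) ^ n), ‖GG F ((ξ, η), z)‖ₑ) := by
    intro n
    have h1 : Measurable (fun w : ((Fin m → ℝ) × ℝ) × ℝ => ‖GG F ((w.1.2, w.2), w.1.1)‖ₑ) := by
      have h := hm.comp (by fun_prop : Measurable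
        fun w : ((Fin m → ℝ) × ℝ) × ℝ => ((w.1.2, w.2), w.1.1))
      simpa only [Function.comp_def] using h
    exact (h1.lintegral_prod_right' (ν := volume.restrict _)).lintegral_prod_right'
      (ν := volume.restrict _)
  have hma : Measurable (fun z => ∫⁻ y, phi (p' + 1) (fun x y => f (Tm e ((x, y), z))) y) := by
    simp_rw [phi_eq e hp]
    have h : Continuous (fun w : ((Fin m → ℝ) × ℝ) × ℝ =>
        PD (p' + 1) (e 0) f (Tm e ((w.2, w.1.2), w.1.1))) :=
      (PD_cont _ hp).comp ((Tm_cont e).comp (by fun_prop))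
    exact (h.measurable.enorm.lintegral_prod_right' (ν := volume)).lintegral_prod_right' (ν := volume)
  calc _ ≤ ∑' n : ℤ, c * (ENNReal.ofReal ((b ^ 2) ^ n / ((a ^ 2) ^ n) ^ p') *
          ∫⁻ z, ∫⁻ ξ in Shell (a ^ 2) n,
            ∫⁻ η in Set.Icc (-(1 / (b ^ 2) ^ n)) (1 / (b ^ 2) ^ n), ‖GG F ((ξ, η), z)‖ₑ) := by
        refine ENNReal.tsum_le_tsum fun n => (box_le hFc hFi _ _ _).trans ?_
        rw [← mul_assoc]
        exact mul_le_mul' (hV n) le_rfl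
    _ = c * ∫⁻ z, ∑' n : ℤ, ENNReal.ofReal ((b ^ 2) ^ n / ((a ^ 2) ^ n) ^ p') *
          ∫⁻ ξ in Shell (a ^ 2) n,
            ∫⁻ η in Set.Icc (-(1 / (b ^ 2) ^ n)) (1 / (b ^ 2) ^ n), ‖GG F ((ξ, η), z)‖ₑ := by
        rw [ENNReal.tsum_mul_left, lintegral_tsum fun n => ((hm1 n).const_mul _).aemeasurable]
        congr 2; ext n
        rw [lintegral_const_mul _ (hm1 n)]
    _ ≤ c * ∫⁻ z, KK p' q' a b * ((∫⁻ y, phi (p' + 1) (fun x y => f (Tm e ((x, y), z))) y) +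
          ∫⁻ x, psi (q' + 1) (fun x y => f (Tm e ((x, y), z))) x) := by
        refine mul_le_mul' le_rfl (lintegral_mono_ae ?_)
        filter_upwards [hFi.prod_left_ae] with z hz
        have D := mk_dat e hp hq z hz
        have h := two_dim ha hb hab D
        simp only [GG, hF]
        exact h
    _ = _ := by
        rw [lintegral_const_mul' _ _ (KK_ne_top _ _ _ _), lintegral_add_left hma, lint_phi e hp,
          lint_psi e hq, mul_assoc]

end Kol

open MeasureTheory Metric
open scoped RealInnerProductSpace ENNReal

namespace Kol

/-- box of scale `n` -/
noncomputable def Vb {m : ℕ} (h : ℝ) (p : ℕ) (ρ : Fin m → ℕ) : Set (Fin m → ℝ) :=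
  Set.Icc (fun k => -((1 / h) ^ ((p : ℝ) / ρ k))) (fun k => (1 / h) ^ ((p : ℝ) / ρ k))

lemma s_eq {a b : ℝ} (ha : 2 ≤ a) (hb : 2 ≤ b) {p q : ℕ} (hq : q ≠ 0) (hab : a ^ p = b ^ q) (n : ℤ) :
    1 / (b ^ 2) ^ n = (1 / (a ^ 2) ^ n) ^ ((p : ℝ) / q) := by
  have hb0 : 0 < b := by linarith
  have ha0 : 0 < a := by linarith
  have h1 : ((b ^ 2) ^ n) ^ q = ((a ^ 2) ^ n) ^ p := by
    have e : ∀ (c : ℝ) (k : ℕ), ((c ^ 2) ^ n) ^ k = ((c ^ k) ^ 2) ^ n := by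
      intro c k
      rw [← zpow_natCast, ← zpow_mul, mul_comm n, zpow_mul, zpow_natCast, ← pow_mul, ← pow_mul, mul_comm]
    rw [e, e, hab]
  have h2 : (1 / (b ^ 2) ^ n) ^ q = (1 / (a ^ 2) ^ n) ^ p := by
    rw [div_pow, div_pow, h1, one_pow, one_pow]
  have hs : 0 ≤ 1 / (b ^ 2) ^ n := by positivity
  have hh : 0 ≤ 1 / (a ^ 2) ^ n := by positivity
  rw [div_eq_mul_inv (p : ℝ), Real.rpow_mul hh, Real.rpow_natCast, ← h2, Real.pow_rpow_inv_natCast hs hq]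

lemma vol_Vb {m : ℕ} {a b : ℝ} (ha : 2 ≤ a) (hb : 2 ≤ b) {p' q' : ℕ}
    (hab : a ^ (p' + 1) = b ^ (q' + 1)) (ρ : Fin m → ℕ)
    (hs : (1 : ℝ) / (p' + 1 : ℕ) + (1 / (q' + 1 : ℕ) + ∑ k, (1 : ℝ) / ρ k) = 1) (n : ℤ) :
    volume (Vb ((a ^ 2) ^ n) (p' + 1) ρ) ≤
      2 ^ m * ENNReal.ofReal ((b ^ 2) ^ n / ((a ^ 2) ^ n) ^ p') := by
  have hb0 : 0 < b := by linarith
  have ha0 : 0 < a := by linarith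
  unfold Vb
  have hse := s_eq ha hb (Nat.succ_ne_zero q') hab n
  set h := (a ^ 2) ^ n with hh
  have hpos : 0 < h := by positivity
  have hpos' : 0 < 1 / h := by positivity
  rw [Real.volume_Icc_pi]
  have e1 : ∀ k, ENNReal.ofReal ((1 / h) ^ (((p' + 1 : ℕ) : ℝ) / ρ k) - -((1 / h) ^ (((p' + 1 : ℕ) : ℝ) / ρ k)))
      = 2 * ENNReal.ofReal ((1 / h) ^ (((p' + 1 : ℕ) : ℝ) / ρ k)) := by
    intro k
    rw [sub_neg_eq_add, ← two_mul, ENNReal.ofReal_mul (by norm_num)]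
    norm_num
  rw [Finset.prod_congr rfl fun k _ => e1 k, Finset.prod_mul_distrib, Finset.prod_const,
    Finset.card_univ, Fintype.card_fin, ← ENNReal.ofReal_prod_of_nonneg (fun k _ => by positivity),
    ← Real.rpow_sum_of_pos hpos']
  refine le_of_eq ?_
  congr 2
  have hsum : ∑ k, ((p' + 1 : ℕ) : ℝ) / ρ k = (p' : ℝ) - ((p' + 1 : ℕ) : ℝ) / (q' + 1 : ℕ) := by
    have h2 : ∑ k, ((p' + 1 : ℕ) : ℝ) / ρ k = ((p' + 1 : ℕ) : ℝ) * ∑ k, (1 : ℝ) / ρ k := by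
      rw [Finset.mul_sum]; congr 1; ext k; ring
    have h3 : ∑ k, (1 : ℝ) / ρ k = 1 - 1 / (p' + 1 : ℕ) - 1 / (q' + 1 : ℕ) := by linarith
    rw [h2, h3]
    have : ((p' + 1 : ℕ) : ℝ) ≠ 0 := by positivity
    field_simp
    push_cast
    ring
  rw [hsum, Real.rpow_sub hpos', ← hse, Real.rpow_natCast]
  have : 0 < (b ^ 2) ^ n := by positivity
  field_simp
  rw [← mul_pow, one_div_mul_cancel hpos.ne', one_pow]

lemma abs_le_rpow {x t g : ℝ} {k p : ℕ} (hk : k ≠ 0) (ht : |t| ≤ g)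
    (hx : |x| ^ k ≤ |t| ^ p) : |x| ≤ g ^ ((p : ℝ) / k) := by
  have hg : 0 ≤ g := (abs_nonneg t).trans ht
  rw [div_eq_mul_inv, Real.rpow_mul hg, Real.rpow_natCast,
    ← Real.pow_rpow_inv_natCast (abs_nonneg x) hk]
  refine Real.rpow_le_rpow (by positivity) (hx.trans ?_) (by positivity)
  exact pow_le_pow_left₀ (abs_nonneg _) ht _

lemma cover_one {m : ℕ} {a b : ℝ} (ha : 2 ≤ a) (hb : 2 ≤ b) {p q : ℕ} (hq : q ≠ 0)
    (hab : a ^ p = b ^ q) (ρ : Fin m → ℕ) (hρ : ∀ k, ρ k ≠ 0) (w : (ℝ × ℝ) × (Fin m → ℝ))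
    (h0 : w.1.1 ≠ 0) (h1 : |w.1.2| ^ q ≤ |w.1.1| ^ p) (h2 : ∀ k, |w.2 k| ^ ρ k ≤ |w.1.1| ^ p) :
    ∃ n : ℤ, w ∈ (Shell (a ^ 2) n ×ˢ Set.Icc (-(1 / (b ^ 2) ^ n)) (1 / (b ^ 2) ^ n)) ×ˢ
      Vb ((a ^ 2) ^ n) p ρ := by
  have hpos : 0 < |w.1.1| := abs_pos.mpr h0
  have ha0 : 0 < a := by linarith
  obtain ⟨n, hn1, hn2⟩ := exists_mem_Ico_zpow (x := 1 / |w.1.1|) (y := a ^ 2) (by positivity)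
    (by nlinarith)
  have hle : |w.1.1| ≤ 1 / (a ^ 2) ^ n := by
    rw [le_div_iff₀ (by positivity)]
    rw [le_div_iff₀ hpos] at hn1
    linarith
  refine ⟨n, ⟨⟨?_, hle⟩, ?_⟩, ?_⟩
  · rw [div_lt_iff₀ (by positivity)]
    rw [div_lt_iff₀ hpos] at hn2
    linarith
  · rw [s_eq ha hb hq hab n]
    exact abs_le.mp (abs_le_rpow hq hle h1)
  · have h3 := fun k => abs_le.mp (abs_le_rpow (hρ k) hle (h2 k))
    exact ⟨fun k => (h3 k).1, fun k => (h3 k).2⟩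

/-- the Fourier transform on `ℝ^d` -/
noncomputable def fh {d : ℕ} (f : EuclideanSpace ℝ (Fin d) → ℂ) (ξ : EuclideanSpace ℝ (Fin d)) : ℂ :=
  ∫ x : EuclideanSpace ℝ (Fin d), ek ⟪x, ξ⟫ * f x

lemma fh_Tm {d m : ℕ} (e : Fin (m + 2) ≃ Fin d) (f : EuclideanSpace ℝ (Fin d) → ℂ)
    (w : (ℝ × ℝ) × (Fin m → ℝ)) : fh f (Tm e w) = FH (fun w => f (Tm e w)) w := by
  unfold fh FH
  rw [← (Tm_mp e).integral_comp (Tm e).measurableEmbedding]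
  simp_rw [Tm_inner]

/-- sets -/
noncomputable def SS {d m : ℕ} (e : Fin (m + 2) ≃ Fin d) (r : Fin d → ℕ) (a b : ℝ) (n : ℤ) :
    Set (EuclideanSpace ℝ (Fin d)) :=
  (Tm e).symm ⁻¹' ((Shell (a ^ 2) n ×ˢ Set.Icc (-(1 / (b ^ 2) ^ n)) (1 / (b ^ 2) ^ n)) ×ˢ
      Vb ((a ^ 2) ^ n) (r (e 0)) (fun k => r (e k.succ.succ)))

lemma cover_e {d m : ℕ} (e : Fin (m + 2) ≃ Fin d) (r : Fin d → ℕ) (hr : ∀ i, 0 < r i)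
    {a b : ℝ} (ha : 2 ≤ a) (hb : 2 ≤ b) (hab : a ^ r (e 0) = b ^ r (e 1))
    (v : EuclideanSpace ℝ (Fin d)) (h0 : v (e 0) ≠ 0)
    (hv : ∀ k, |v k| ^ r k ≤ |v (e 0)| ^ r (e 0)) : ∃ n, v ∈ SS e r a b n := by
  obtain ⟨w, rfl⟩ := (Tm e).surjective v
  have e0 : Tm e w (e 0) = w.1.1 := by rw [Tm_apply]; rfl
  have e1 : Tm e w (e 1) = w.1.2 := by rw [Tm_apply]; rfl
  have e2 : ∀ k : Fin m, Tm e w (e k.succ.succ) = w.2 k := by intro k; rw [Tm_apply]; rfl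
  rw [e0] at h0 hv
  obtain ⟨n, hn⟩ := cover_one ha hb (hr (e 1)).ne' hab (fun k => r (e k.succ.succ))
    (fun k => (hr _).ne') w h0 (by rw [← e1]; exact hv _) (fun k => by rw [← e2]; exact hv _)
  refine ⟨n, ?_⟩
  unfold SS
  rw [Set.mem_preimage, MeasurableEquiv.symm_apply_apply]
  exact hn

lemma bound_e {d m : ℕ} (e : Fin (m + 2) ≃ Fin d) (r : Fin d → ℕ) (hr : ∀ i, 0 < r i)
    (hsum : ∑ i, (1 : ℝ) / (r i) = 1)
    {a b : ℝ} (ha : 2 ≤ a) (hb : 2 ≤ b) (hab : a ^ r (e 0) = b ^ r (e 1))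
    {f : EuclideanSpace ℝ (Fin d) → ℂ} (hf : ∀ k, ContDiff ℝ (r k) f) (hi : Integrable f) :
    ∑' n : ℤ, ∫⁻ v in SS e r a b n, ‖fh f v‖ₑ ≤ 2 ^ m * KK (r (e 0) - 1) (r (e 1) - 1) a b *
        ((∫⁻ x, ‖PD (r (e 0)) (e 0) f x‖ₑ) + ∫⁻ x, ‖PD (r (e 1)) (e 1) f x‖ₑ) := by
  obtain ⟨p', hp'⟩ : ∃ p', r (e 0) = p' + 1 := Nat.exists_eq_succ_of_ne_zero (hr _).ne'
  obtain ⟨q', hq'⟩ : ∃ q', r (e 1) = q' + 1 := Nat.exists_eq_succ_of_ne_zero (hr _).ne'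
  have hfp := hf (e 0)
  have hfq := hf (e 1)
  have hs : (1 : ℝ) / (p' + 1 : ℕ) + (1 / (q' + 1 : ℕ) + ∑ k : Fin m, (1 : ℝ) / r (e k.succ.succ)) = 1 := by
    rw [← e.sum_comp, Fin.sum_univ_succ, Fin.sum_univ_succ, hp'] at hsum
    have : e (Fin.succ 0) = e 1 := rfl
    rw [this, hq'] at hsum
    exact hsum
  unfold SS
  rw [hp'] at hfp hab ⊢
  rw [hq'] at hfq hab ⊢
  refine le_trans (le_of_eq ?_) (per_e e ha hb hab hfp hfq hi
    (fun n => Vb ((a ^ 2) ^ n) (p' + 1) (fun k => r (e k.succ.succ))) (2 ^ m)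
    (vol_Vb ha hb hab _ hs))
  congr 1; ext n
  rw [← (Tm_mp e).setLIntegral_comp_preimage_emb (Tm e).measurableEmbedding]
  simp_rw [fh_Tm]
  rw [← Set.preimage_comp, MeasurableEquiv.symm_comp_self, Set.preimage_id]

end Kol

open MeasureTheory Metric
open scoped RealInnerProductSpace ENNReal

namespace Kol

lemma two_le_r {d : ℕ} (hd : 2 ≤ d) (r : Fin d → ℕ) (hr : ∀ i, 0 < r i)
    (hsum : ∑ i, (1 : ℝ) / (r i) = 1) (i : Fin d) : 2 ≤ r i := by
  by_contra hcc
  have h1 : r i = 1 := by have := hr i; omega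
  have : Nontrivial (Fin d) := Fin.nontrivial_iff_two_le.mpr hd
  obtain ⟨j, hj⟩ := exists_ne i
  have h := Finset.single_lt_sum (f := fun i => (1 : ℝ) / r i) hj (Finset.mem_univ i)
    (Finset.mem_univ j) (by have := hr j; positivity) (fun k _ _ => by positivity)
  rw [hsum, h1] at h
  norm_num at h

lemma sqrt2_pow {q : ℕ} (hq : 2 ≤ q) : 2 ≤ Real.sqrt 2 ^ q := by
  calc (2 : ℝ) = Real.sqrt 2 ^ 2 := by rw [Real.sq_sqrt (by norm_num)]
    _ ≤ _ := pow_le_pow_right₀ (by rw [Real.one_le_sqrt]; norm_num) hq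

theorem main (m : ℕ) (r : Fin (m + 2) → ℕ) (hr : ∀ i, 0 < r i)
    (hsum : ∑ i, (1 : ℝ) / (r i) = 1) :
    ∃ C : ℝ≥0∞, C ≠ ⊤ ∧ ∀ f : EuclideanSpace ℝ (Fin (m + 2)) → ℂ,
      (∀ k, ContDiff ℝ (r k) f) → Integrable f →
      ∫⁻ ξ, ‖fh f ξ‖ₑ ≤ C * ∑ j, ∫⁻ x, ‖PD (r j) j f x‖ₑ := by
  have h2 := two_le_r (by omega) r hr hsum
  have hex : ∀ i : Fin (m + 2), ∃ e : Fin (m + 2) ≃ Fin (m + 2), e 0 = i := by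
    intro i
    obtain ⟨j, hj⟩ := exists_ne i
    obtain ⟨e, he, _⟩ := exists_equiv m i j hj.symm
    exact ⟨e, he⟩
  choose e he using hex
  let a : Fin (m + 2) → ℝ := fun i => Real.sqrt 2 ^ r (e i 1)
  let b : Fin (m + 2) → ℝ := fun i => Real.sqrt 2 ^ r (e i 0)
  have ha : ∀ i, 2 ≤ a i := fun i => sqrt2_pow (h2 _)
  have hb : ∀ i, 2 ≤ b i := fun i => sqrt2_pow (h2 _)
  have hab : ∀ i, a i ^ r (e i 0) = b i ^ r (e i 1) := by
    intro i; simp only [a, b]; rw [← pow_mul, ← pow_mul, mul_comm]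
  let K : Fin (m + 2) → ℝ≥0∞ := fun i => 2 ^ m * KK (r (e i 0) - 1) (r (e i 1) - 1) (a i) (b i)
  have hK : ∀ i, K i ≠ ⊤ := fun i => ENNReal.mul_ne_top (by finiteness) (KK_ne_top _ _ _ _)
  refine ⟨∑ i, K i * 2, ?_, ?_⟩
  · exact ENNReal.sum_ne_top.mpr fun i _ => ENNReal.mul_ne_top (hK i) (by finiteness)
  intro f hf hi
  set N : ℝ≥0∞ := ∑ j, ∫⁻ x, ‖PD (r j) j f x‖ₑ with hN
  have hNle : ∀ j, ∫⁻ x, ‖PD (r j) j f x‖ₑ ≤ N := fun j =>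
    Finset.single_le_sum (f := fun j => ∫⁻ x, ‖PD (r j) j f x‖ₑ) (fun _ _ => zero_le) (Finset.mem_univ j)
  have hcov : (Set.univ : Set (EuclideanSpace ℝ (Fin (m + 2)))) ≤ᵐ[volume]
      (⋃ i, ⋃ n, SS (e i) r (a i) (b i) n : Set (EuclideanSpace ℝ (Fin (m + 2)))) := by
    have h0 : ∀ᵐ v : EuclideanSpace ℝ (Fin (m + 2)), v ≠ 0 := by
      rw [ae_iff]; simp
    filter_upwards [h0] with v hv _
    obtain ⟨i, -, hmax⟩ := Finset.exists_max_image Finset.univ (fun k => |v k| ^ r k)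
      Finset.univ_nonempty
    have hvi : v i ≠ 0 := by
      intro hvi
      apply hv
      ext k
      have h3 := hmax k (Finset.mem_univ k)
      rw [hvi, abs_zero, zero_pow (hr i).ne'] at h3
      have h4 : |v k| ^ r k = 0 := le_antisymm h3 (by positivity)
      have h5 := pow_eq_zero_iff (hr k).ne' |>.mp h4
      simpa using h5
    obtain ⟨n, hn⟩ := cover_e (e i) r hr (ha i) (hb i) (hab i) v (by rw [he]; exact hvi)
      (fun k => by rw [he]; exact hmax k (Finset.mem_univ k))
    exact Set.mem_iUnion.mpr ⟨i, Set.mem_iUnion.mpr ⟨n, hn⟩⟩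
  calc ∫⁻ ξ, ‖fh f ξ‖ₑ = ∫⁻ ξ in Set.univ, ‖fh f ξ‖ₑ := setLIntegral_univ _ |>.symm
    _ ≤ ∫⁻ ξ in ⋃ i, ⋃ n, SS (e i) r (a i) (b i) n, ‖fh f ξ‖ₑ := lintegral_mono_set' hcov
    _ ≤ ∑' i, ∫⁻ ξ in ⋃ n, SS (e i) r (a i) (b i) n, ‖fh f ξ‖ₑ := lintegral_iUnion_le _ _
    _ ≤ ∑' i, K i * 2 * N := by
        refine ENNReal.tsum_le_tsum fun i => (lintegral_iUnion_le _ _).trans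
          ((bound_e (e i) r hr hsum (ha i) (hb i) (hab i) hf hi).trans ?_)
        rw [mul_assoc (K i), two_mul]
        exact mul_le_mul' le_rfl (add_le_add (hNle _) (hNle _))
    _ = _ := by rw [tsum_fintype, Finset.sum_mul]

end Kol

/-- Kolyada-type inequality: `‖f̂‖_{L¹} ≤ C ∑_j ‖∂^{r_j}f/∂x_j^{r_j}‖_{L¹}` whenever
`∑ 1/r_j = 1`. -/
theorem stmt_12 (d : ℕ) (hd : 2 ≤ d) (r : Fin d → ℕ) (hr : ∀ i, 0 < r i)
    (hsum : ∑ i, (1 : ℝ) / (r i) = 1) :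
    ∃ C : ℝ, ∀ f : EuclideanSpace ℝ (Fin d) → ℂ,
      ContDiff ℝ ((Finset.univ.sup r : ℕ) : ℕ∞) f →
      Integrable f →
      (∀ j : Fin d,
        Integrable (fun x : EuclideanSpace ℝ (Fin d) =>
          iteratedFDeriv ℝ (r j) f x (fun _ => EuclideanSpace.single j (1 : ℝ)))) →
      (∫⁻ ξ : EuclideanSpace ℝ (Fin d),
          (‖∫ x : EuclideanSpace ℝ (Fin d),
              Complex.exp (-(Complex.I * (⟪x, ξ⟫ : ℝ))) * f x‖₊ : ℝ≥0∞)) ≤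
        ENNReal.ofReal
          (C * ∑ j : Fin d,
            ∫ x : EuclideanSpace ℝ (Fin d),
              ‖iteratedFDeriv ℝ (r j) f x (fun _ => EuclideanSpace.single j (1 : ℝ))‖) := by
  obtain ⟨m, rfl⟩ : ∃ m, d = m + 2 := ⟨d - 2, by omega⟩
  obtain ⟨C, hC, H⟩ := Kol.main m r hr hsum
  refine ⟨C.toReal, fun f hf hi hd' => ?_⟩
  have hfk : ∀ k, ContDiff ℝ (r k) f := by
    intro k
    refine hf.of_le ?_
    have : r k ≤ Finset.univ.sup r := Finset.le_sup (Finset.mem_univ k)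
    exact_mod_cast this
  refine (H f hfk hi).trans (le_of_eq ?_)
  rw [ENNReal.ofReal_mul ENNReal.toReal_nonneg, ENNReal.ofReal_toReal hC,
    ENNReal.ofReal_sum_of_nonneg (fun j _ => integral_nonneg fun _ => norm_nonneg _)]
  congr 1
  refine Finset.sum_congr rfl fun j _ => ?_
  rw [ofReal_integral_norm_eq_lintegral_enorm (hd' j)]
  rfl
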